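/- arXiv:1104.5188 — 2 statements merged into one kernel-verified Lean document; each statement's English description precedes it below -/
import Mathlib

section
/- Let G be a locally compact second countable group with left Haar measure m_G, and let (F_n) be a tempered Følner sequence of measurable subsets of G with 0 < m_G(F_n) < ∞. Let T be a measurable measure-preserving action of G on a probability space (Ω, P), let X be a separable Banach space, and let φ : Ω → X be Bochner integrable. Define A_n φ(ω) := (1/m_G(F_n)) ∫_{F_n} φ(T^g ω) dm_G(g). Then there exists a Bochner integrable function ψ : Ω → X which is T-invariant (for each g ∈ G, ψ(T^g ω) = ψ(ω) for P-a.e. ω) such that A_n φ(ω) → ψ(ω) for P-a.e. ω and ∫_Ω ‖A_n φ(ω) − ψ(ω)‖ dP(ω) → 0. -/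
open Filter MeasureTheory Topology
open scoped Pointwise symmDiff ENNReal

namespace ErgBanach

set_option linter.unusedSectionVars false

section GroupMax
variable {G : Type*} [Group G] [TopologicalSpace G] [IsTopologicalGroup G]
    [LocallyCompactSpace G] [SecondCountableTopology G]
    [MeasurableSpace G] [BorelSpace G]
    (μ : Measure G) [μ.IsHaarMeasure]

/-- Duality between the two convolution kernels. -/
lemma conv_dual (F : Set G) {u v : G → ℝ≥0∞} (hu : Measurable u) (hv : Measurable v) :
    ∫⁻ g, u g * ∫⁻ e in F, v (e⁻¹ * g) ∂μ ∂μ = ∫⁻ h, v h * ∫⁻ e in F, u (e * h) ∂μ ∂μ := by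
  have h1 : ∀ g, u g * ∫⁻ e in F, v (e⁻¹ * g) ∂μ = ∫⁻ e in F, u g * v (e⁻¹ * g) ∂μ := fun g =>
    (lintegral_const_mul _ (by fun_prop)).symm
  have h2 : ∀ h, v h * ∫⁻ e in F, u (e * h) ∂μ = ∫⁻ e in F, v h * u (e * h) ∂μ := fun h =>
    (lintegral_const_mul _ (by fun_prop)).symm
  simp_rw [h1, h2]
  rw [lintegral_lintegral_swap (by fun_prop)]
  conv_rhs => rw [lintegral_lintegral_swap (by fun_prop)]
  refine lintegral_congr fun e => ?_
  rw [← lintegral_mul_left_eq_self (μ := μ) _ e]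
  refine lintegral_congr fun h => ?_
  simp [mul_comm]

/-- Normalized kernel. -/
noncomputable def Lam (F B : Set G) (g : G) : ℝ≥0∞ :=
  (∫⁻ e in F, B.indicator 1 (e⁻¹ * g) ∂μ) / μ F

/-- The selected points. -/
def Sel (A F : Set G) (S : G → ℝ≥0∞) : Set G :=
  A ∩ {h | ∫⁻ e in F, {g | 1 < S g}.indicator 1 (e * h) ∂μ = 0}

/-- The partial sums of the greedy fractional packing. -/
noncomputable def Pack (A F : ℕ → Set G) : ℕ → G → ℝ≥0∞
  | 0 => fun _ => 0
  | d + 1 => fun g => Pack A F d g + Lam μ (F d) (Sel μ (A d) (F d) (Pack A F d)) g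

lemma meas_Lam (F : Set G) {B : Set G} (hB : MeasurableSet B) : Measurable (Lam μ F B) := by
  unfold Lam
  refine Measurable.div_const ?_ _
  apply Measurable.lintegral_prod_right' (f := fun p : G × G => B.indicator 1 (p.2⁻¹ * p.1))
  exact (measurable_one.indicator hB).comp (by fun_prop)

lemma meas_Sel {A F : Set G} (hA : MeasurableSet A) {S : G → ℝ≥0∞} (hS : Measurable S) :
    MeasurableSet (Sel μ A F S) := by
  refine hA.inter ?_
  have : Measurable fun h => ∫⁻ e in F, {g | 1 < S g}.indicator (1 : G → ℝ≥0∞) (e * h) ∂μ := by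
    apply Measurable.lintegral_prod_right'
      (f := fun p : G × G => {g | 1 < S g}.indicator (1 : G → ℝ≥0∞) (p.2 * p.1))
    exact (measurable_one.indicator (measurableSet_lt measurable_const hS)).comp (by fun_prop)
  exact this (measurableSet_singleton 0)

variable {A F : ℕ → Set G}

lemma meas_Pack (hA : ∀ n, MeasurableSet (A n)) (d : ℕ) : Measurable (Pack μ A F d) := by
  induction d with
  | zero => exact measurable_const
  | succ d ih => exact ih.add (meas_Lam μ _ (meas_Sel μ (hA d) ih))

lemma Pack_eq_sum (d : ℕ) (g : G) :
    Pack μ A F d g = ∑ k ∈ Finset.range d, Lam μ (F k) (Sel μ (A k) (F k) (Pack μ A F k)) g := by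
  induction d with
  | zero => simp [Pack]
  | succ d ih => rw [Finset.sum_range_succ, ← ih]; rfl

lemma Lam_le_one (F B : Set G) (g : G) : Lam μ F B g ≤ 1 := by
  unfold Lam
  refine ENNReal.div_le_of_le_mul ?_
  rw [one_mul]
  calc ∫⁻ e in F, B.indicator 1 (e⁻¹ * g) ∂μ ≤ ∫⁻ e in F, 1 ∂μ :=
        lintegral_mono fun e => Set.indicator_le_self' (f := (1 : G → ℝ≥0∞)) (by simp) _
    _ = μ F := by simp

lemma Lam_dual (F : Set G) {B : Set G} (hB : MeasurableSet B) {u : G → ℝ≥0∞} (hu : Measurable u) :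
    ∫⁻ g, u g * Lam μ F B g ∂μ = ∫⁻ h in B, (∫⁻ e in F, u (e * h) ∂μ) / μ F ∂μ := by
  have := conv_dual μ F hu (measurable_one.indicator hB)
  unfold Lam
  simp_rw [div_eq_mul_inv, ← mul_assoc]
  have hm : Measurable fun h => ∫⁻ e in F, u (e * h) ∂μ :=
    Measurable.lintegral_prod_right' (f := fun p : G × G => u (p.2 * p.1)) (by fun_prop)
  have hm2 : Measurable fun g => ∫⁻ e in F, B.indicator (1 : G → ℝ≥0∞) (e⁻¹ * g) ∂μ := by
    apply Measurable.lintegral_prod_right' (f := fun p : G × G => B.indicator 1 (p.2⁻¹ * p.1))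
    exact (measurable_one.indicator hB).comp (by fun_prop)
  rw [lintegral_mul_const _ (show Measurable fun g => u g * _ from hu.mul hm2), lintegral_mul_const _ hm, this,
    ← lintegral_indicator hB]
  congr 1
  refine lintegral_congr fun h => ?_
  by_cases hh : h ∈ B <;> simp [hh]

lemma Pack_le_two (hA : ∀ n, MeasurableSet (A n)) (hF : ∀ n, MeasurableSet (F n)) (d : ℕ) :
    ∀ᵐ g ∂μ, Pack μ A F d g ≤ 2 := by
  induction d with
  | zero => simp [Pack]
  | succ d ih =>
    have hm := meas_Pack (F := F) μ hA d
    have hB := meas_Sel (F := F d) μ (hA d) hm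
    have hs : MeasurableSet {g | 1 < Pack μ A F d g} := measurableSet_lt measurable_const hm
    have h0 := Lam_dual μ (F d) hB (measurable_one.indicator hs)
    have h1 : ∫⁻ h in Sel μ (A d) (F d) (Pack μ A F d),
        (∫⁻ e in F d, {g | 1 < Pack μ A F d g}.indicator (1 : G → ℝ≥0∞) (e * h) ∂μ) / μ (F d) ∂μ
          = 0 := by
      rw [setLIntegral_congr_fun (g := fun _ => 0) hB, lintegral_zero]
      intro h hh
      have : _ = _ := hh.2
      simp [this]
    rw [h1, lintegral_eq_zero_iff (show Measurable fun g => _ * _ from (measurable_one.indicator hs).mul (meas_Lam μ _ hB))] at h0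
    filter_upwards [ih, h0] with g hg1 hg2
    change Pack μ A F d g + Lam μ (F d) (Sel μ (A d) (F d) (Pack μ A F d)) g ≤ 2
    by_cases hc : 1 < Pack μ A F d g
    · have : Lam μ (F d) (Sel μ (A d) (F d) (Pack μ A F d)) g = 0 := by
        simpa [Set.indicator, hc] using hg2
      rw [this, add_zero]; exact hg1
    · rw [← one_add_one_eq_two]
      exact add_le_add (not_lt.1 hc) (Lam_le_one μ _ _ _)

lemma rev_max (hA : ∀ n, MeasurableSet (A n)) (hF : ∀ n, MeasurableSet (F n))
    (hpos : ∀ n, 0 < μ (F n)) (hfin : ∀ n, μ (F n) < ∞) (N : ℕ)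
    (D : ℕ → Set G) (hD : ∀ n, MeasurableSet (D n)) (C : ℝ≥0∞)
    (hDC : ∀ n < N, μ (D n) ≤ C * μ (F n)) (hFD : ∀ i d, i < d → d < N → (F d)⁻¹ * F i ⊆ D i)
    {a : G → ℝ≥0∞} (ha : Measurable a) (t : ℝ≥0∞)
    (hAa : ∀ d < N, ∀ h ∈ A d, t ≤ (∫⁻ e in F d, a (e * h) ∂μ) / μ (F d)) :
    t * μ (⋃ d ∈ Finset.range N, A d) ≤ 2 * (1 + C) * ∫⁻ g, a g ∂μ := by
  set B : ℕ → Set G := fun k => Sel μ (A k) (F k) (Pack μ A F k) with hBdef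
  have hB : ∀ k, MeasurableSet (B k) := fun k => meas_Sel μ (hA k) (meas_Pack μ hA k)
  -- the lost set
  set R : G → ℝ≥0∞ := fun h => ∑ k ∈ Finset.range N,
    (∫⁻ x in D k, (B k).indicator 1 (x⁻¹ * h) ∂μ) / μ (F k) with hR
  have hRm : ∀ k, Measurable fun h =>
      (∫⁻ x in D k, (B k).indicator (1 : G → ℝ≥0∞) (x⁻¹ * h) ∂μ) := fun k => by
    apply Measurable.lintegral_prod_right' (f := fun p : G × G => (B k).indicator 1 (p.2⁻¹ * p.1))
    exact (measurable_one.indicator (hB k)).comp (by fun_prop)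
  have hRint : ∫⁻ h, R h ∂μ ≤ C * ∑ k ∈ Finset.range N, μ (B k) := by
    rw [hR, lintegral_finsetSum _ fun k _ => (hRm k).div_const _, Finset.mul_sum]
    refine Finset.sum_le_sum fun k hk => ?_
    have := conv_dual μ (D k) (u := 1) measurable_one (measurable_one.indicator (hB k))
    simp only [Pi.one_apply, one_mul, lintegral_const, Measure.restrict_apply_univ,
      MeasurableSet.univ, Measure.restrict_apply, Set.univ_inter] at this
    simp_rw [div_eq_mul_inv]
    rw [lintegral_mul_const _ (hRm k), this, lintegral_mul_const _ (measurable_one.indicator (hB k)),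
      lintegral_indicator_one (hB k), mul_assoc, mul_comm C]
    gcongr
    rw [← div_eq_mul_inv]
    exact ENNReal.div_le_of_le_mul (hDC k (Finset.mem_range.1 hk))
  have hsub : (⋃ d ∈ Finset.range N, A d) ⊆ (⋃ d ∈ Finset.range N, B d) ∪ {h | 1 ≤ R h} := by
    intro h hh
    simp only [Set.mem_iUnion, Finset.mem_range] at hh
    obtain ⟨d, hdN, hhA⟩ := hh
    by_cases hhB : h ∈ B d
    · left; simp only [Set.mem_iUnion, Finset.mem_range]; exact ⟨d, hdN, hhB⟩
    right
    have h1 : ∫⁻ e in F d, {g | 1 < Pack μ A F d g}.indicator 1 (e * h) ∂μ ≠ 0 := fun h0 =>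
      hhB ⟨hhA, h0⟩
    obtain ⟨e, heF, he⟩ : ∃ e ∈ F d, 1 < Pack μ A F d (e * h) := by
      by_contra! hcon
      apply h1
      rw [setLIntegral_congr_fun (g := fun _ => 0) (hF d), lintegral_zero]
      intro e he
      simp [hcon e he]
    change 1 ≤ R h
    refine he.le.trans ?_
    rw [Pack_eq_sum]
    calc _ ≤ ∑ k ∈ Finset.range d, (∫⁻ x in D k, (B k).indicator 1 (x⁻¹ * h) ∂μ) / μ (F k) := by
          refine Finset.sum_le_sum fun k hk => ?_
          have hk := Finset.mem_range.1 hk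
          unfold Lam
          refine ENNReal.div_le_div_right ?_ _
          rw [← lintegral_indicator (hF k), ← lintegral_indicator (hD k),
            ← lintegral_mul_left_eq_self _ e]
          refine lintegral_mono fun x => ?_
          by_cases hx : e * x ∈ F k
          · have : x ∈ D k := hFD k d hk hdN ⟨e⁻¹, by simpa using heF, e * x, hx, by simp⟩
            simp only [Set.indicator_of_mem, hx, this, hBdef]
            rw [show (e * x)⁻¹ * (e * h) = x⁻¹ * h by group]
          · simp [hx]
      _ ≤ R h := Finset.sum_le_sum_of_subset (by simpa using hdN.le)
  have hmark : μ {h | 1 ≤ R h} ≤ ∫⁻ h, R h ∂μ := by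
    simpa using mul_meas_ge_le_lintegral (μ := μ)
      (Finset.measurable_sum _ fun k _ => (hRm k).div_const (μ (F k)) : Measurable R) 1
  have hU : μ (⋃ d ∈ Finset.range N, A d) ≤ (1 + C) * ∑ k ∈ Finset.range N, μ (B k) := by
    calc _ ≤ μ (⋃ d ∈ Finset.range N, B d) + μ {h | 1 ≤ R h} :=
          (measure_mono hsub).trans (measure_union_le _ _)
      _ ≤ (∑ k ∈ Finset.range N, μ (B k)) + C * ∑ k ∈ Finset.range N, μ (B k) :=
          add_le_add (measure_biUnion_finset_le _ _) (hmark.trans hRint)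
      _ = _ := by ring
  have hmass : t * ∑ k ∈ Finset.range N, μ (B k) ≤ 2 * ∫⁻ g, a g ∂μ := by
    calc _ = ∑ k ∈ Finset.range N, ∫⁻ h in B k, t ∂μ := by simp [Finset.mul_sum]
      _ ≤ ∑ k ∈ Finset.range N, ∫⁻ g, a g * Lam μ (F k) (B k) g ∂μ := by
          refine Finset.sum_le_sum fun k hk => ?_
          rw [Lam_dual μ (F k) (hB k) ha]
          exact setLIntegral_mono' (hB k) fun h hh => hAa k (Finset.mem_range.1 hk) h hh.1
      _ = ∫⁻ g, a g * Pack μ A F N g ∂μ := by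
          rw [← lintegral_finsetSum _ fun k _ =>
            (show Measurable fun g => a g * _ from ha.mul (meas_Lam μ _ (hB k)))]
          refine lintegral_congr fun g => ?_
          rw [Pack_eq_sum, Finset.mul_sum]
      _ ≤ ∫⁻ g, 2 * a g ∂μ := by
          refine lintegral_mono_ae ?_
          filter_upwards [Pack_le_two μ hA hF N] with g hg
          rw [mul_comm]; gcongr
      _ = _ := lintegral_const_mul _ ha
  calc _ ≤ t * ((1 + C) * ∑ k ∈ Finset.range N, μ (B k)) := by gcongr
    _ = (1 + C) * (t * ∑ k ∈ Finset.range N, μ (B k)) := by ring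
    _ ≤ (1 + C) * (2 * ∫⁻ g, a g ∂μ) := by gcongr
    _ = _ := by ring

/-- The maximal inequality on the group. -/
lemma group_max (F : ℕ → Set G) (hF : ∀ n, MeasurableSet (F n))
    (hpos : ∀ n, 0 < μ (F n)) (hfin : ∀ n, μ (F n) < ∞) (C : ℝ≥0∞)
    (hC : ∀ n : ℕ, μ (⋃ k ∈ Finset.range n, (F k)⁻¹ * F n) ≤ C * μ (F n)) (N : ℕ)
    {a : G → ℝ≥0∞} (ha : Measurable a) (t : ℝ≥0∞) :
    t * μ {h | ∃ j < N, t ≤ (∫⁻ e in F j, a (e * h) ∂μ) / μ (F j)} ≤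
      2 * (1 + C) * ∫⁻ g, a g ∂μ := by
  have hm : ∀ j, Measurable fun h => (∫⁻ e in F j, a (e * h) ∂μ) / μ (F j) := fun j =>
    Measurable.div_const (Measurable.lintegral_prod_right'
      (f := fun p : G × G => a (p.2 * p.1)) (by fun_prop)) _
  have := rev_max μ (A := fun d => {h | t ≤ (∫⁻ e in F (N - 1 - d), a (e * h) ∂μ) /
      μ (F (N - 1 - d))}) (F := fun d => F (N - 1 - d))
    (fun n => measurableSet_le measurable_const (hm _)) (fun n => hF _) (fun n => hpos _)
    (fun n => hfin _) N
    (fun n => toMeasurable μ (⋃ k ∈ Finset.range (N - 1 - n), (F k)⁻¹ * F (N - 1 - n)))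
    (fun n => measurableSet_toMeasurable _ _) C
    (fun n _ => by rw [measure_toMeasurable]; exact hC _)
    (fun i d hid hdN => by
      refine subset_trans ?_ (subset_toMeasurable _ _)
      exact Set.subset_biUnion_of_mem (u := fun k => (F k)⁻¹ * F (N - 1 - i))
        (show N - 1 - d ∈ (Finset.range (N - 1 - i) : Set ℕ) by simp; omega)) ha t
    (fun d _ h hh => hh)
  refine le_trans ?_ this
  gcongr
  rintro h ⟨j, hj, hh⟩
  simp only [Set.mem_iUnion, Finset.mem_range]
  refine ⟨N - 1 - j, by omega, ?_⟩
  have : N - 1 - (N - 1 - j) = j := by omega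
  simpa [this] using hh

end GroupMax
end ErgBanach
open Filter MeasureTheory Topology
open scoped Pointwise symmDiff ENNReal

namespace ErgBanach
set_option linter.unusedSectionVars false

section Transfer
variable {G : Type*} [Group G] [TopologicalSpace G] [IsTopologicalGroup G]
    [LocallyCompactSpace G] [SecondCountableTopology G]
    [MeasurableSpace G] [BorelSpace G]
    {μ : Measure G} [μ.IsHaarMeasure] {F : ℕ → Set G}
    {Ω : Type*} [MeasurableSpace Ω] {P : Measure Ω} [IsProbabilityMeasure P]
    {T : G → Ω → Ω} {C : ℝ≥0∞}

/-- All standing hypotheses. -/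
structure Setup (μ : Measure G) (F : ℕ → Set G) (P : Measure Ω) (T : G → Ω → Ω) (C : ℝ≥0∞) :
    Prop where
  hF : ∀ n, MeasurableSet (F n)
  hpos : ∀ n, 0 < μ (F n)
  hfin : ∀ n, μ (F n) < ∞
  hFol : ∀ g : G, Tendsto (fun n => μ ((g • F n) ∆ F n) / μ (F n)) atTop (𝓝 0)
  hCfin : C < ∞
  hC : ∀ n : ℕ, μ (⋃ k ∈ Finset.range n, (F k)⁻¹ * F n) ≤ C * μ (F n)
  hmul : ∀ g h : G, T (g * h) = T g ∘ T h
  hmeas : Measurable fun p : G × Ω => T p.1 p.2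
  hpres : ∀ g : G, MeasurePreserving (T g) P P

/-- Averages of nonnegative functions. -/
noncomputable def Ap (μ : Measure G) (F : ℕ → Set G) (T : G → Ω → Ω) (f : Ω → ℝ≥0∞) (n : ℕ)
    (ω : Ω) : ℝ≥0∞ :=
  (∫⁻ g in F n, f (T g ω) ∂μ) / μ (F n)

lemma Setup.swap (S : Setup μ F P T C) (s : Set G) {f : Ω → ℝ≥0∞} (hf : Measurable f) :
    ∫⁻ ω, ∫⁻ g in s, f (T g ω) ∂μ ∂P = μ s * ∫⁻ ω, f ω ∂P := by
  rw [lintegral_lintegral_swap (f := fun ω g => f (T g ω))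
    ((hf.comp (S.hmeas.comp measurable_swap)).aemeasurable)]
  simp_rw [fun g => (S.hpres g).lintegral_comp hf]
  simp [mul_comm]

lemma Setup.meas_int (S : Setup μ F P T C) (s : Set G) {f : Ω → ℝ≥0∞} (hf : Measurable f) :
    Measurable fun ω => ∫⁻ g in s, f (T g ω) ∂μ :=
  Measurable.lintegral_prod_right' (f := fun p : Ω × G => f (T p.2 p.1))
    (hf.comp (S.hmeas.comp measurable_swap))

lemma Setup.meas_Ap (S : Setup μ F P T C) (n : ℕ) {f : Ω → ℝ≥0∞} (hf : Measurable f) :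
    Measurable (Ap μ F T f n) :=
  (S.meas_int _ hf).div_const _

lemma Setup.bd (S : Setup μ F P T C) (e : G) (n : ℕ) :
    ∫⁻ h in F n, (F n)ᶜ.indicator 1 (e * h) ∂μ ≤ μ ((e • F n) ∆ F n) := by
  rw [← lintegral_indicator (S.hF n)]
  calc _ ≤ ∫⁻ h, ((e • F n) ∆ F n).indicator 1 (e * h) ∂μ := by
        refine lintegral_mono fun h => ?_
        by_cases hh : h ∈ F n
        · by_cases h2 : e * h ∈ F n
          · simp [hh, h2]
          · have : e * h ∈ (e • F n) ∆ F n := Or.inl ⟨⟨h, hh, rfl⟩, h2⟩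
            simp [hh, this, h2]
        · simp [hh]
    _ = _ := by
        rw [lintegral_mul_left_eq_self (μ := μ) (((e • F n) ∆ F n).indicator 1) e,
          lintegral_indicator_one]
        exact ((S.hF n).const_smul e).symmDiff (S.hF n)

lemma Setup.meas_exc (S : Setup μ F P T C) (s : Set G) (n : ℕ) :
    Measurable fun e => ∫⁻ h in s, (F n)ᶜ.indicator (1 : G → ℝ≥0∞) (e * h) ∂μ := by
  apply Measurable.lintegral_prod_right'
    (f := fun p : G × G => (F n)ᶜ.indicator (1 : G → ℝ≥0∞) (p.1 * p.2))
  exact (measurable_one.indicator (S.hF n).compl).comp (by fun_prop)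

lemma Setup.meas_exc' (S : Setup μ F P T C) (s : Set G) (n : ℕ) :
    Measurable fun e => ∫⁻ h in s, (F n)ᶜ.indicator (1 : G → ℝ≥0∞) (h * e) ∂μ := by
  apply Measurable.lintegral_prod_right'
    (f := fun p : G × G => (F n)ᶜ.indicator (1 : G → ℝ≥0∞) (p.2 * p.1))
  exact (measurable_one.indicator (S.hF n).compl).comp (by fun_prop)

lemma Setup.exc_tendsto (S : Setup μ F P T C) (j : ℕ) :
    Tendsto (fun n => ∫⁻ e in F j, (∫⁻ h in F n, (F n)ᶜ.indicator 1 (e * h) ∂μ) / μ (F n) ∂μ)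
      atTop (𝓝 0) := by
  have : Tendsto (fun n => ∫⁻ e in F j, (∫⁻ h in F n, (F n)ᶜ.indicator 1 (e * h) ∂μ) / μ (F n) ∂μ)
      atTop (𝓝 (∫⁻ _e in F j, 0 ∂μ)) := by
    refine tendsto_lintegral_of_dominated_convergence (fun _ => 1)
      (fun n => (S.meas_exc _ n).div_const _) (fun n => ?_) ?_ ?_
    · refine Eventually.of_forall fun e => ?_
      refine ENNReal.div_le_of_le_mul ?_
      rw [one_mul]
      calc ∫⁻ h in F n, (F n)ᶜ.indicator 1 (e * h) ∂μ ≤ ∫⁻ e in F n, 1 ∂μ :=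
            lintegral_mono fun e => Set.indicator_le_self' (f := (1 : G → ℝ≥0∞)) (by simp) _
        _ = μ (F n) := by simp
    · simpa using (S.hfin j).ne
    · refine Eventually.of_forall fun e => ?_
      refine tendsto_of_tendsto_of_tendsto_of_le_of_le tendsto_const_nhds (S.hFol e)
        (fun _ => zero_le) fun n => ?_
      exact ENNReal.div_le_div_right (S.bd e n) _
  simpa using this

lemma Setup.exc_tendsto' (S : Setup μ F P T C) (j : ℕ) :
    Tendsto (fun n => (∫⁻ h in F n, (∫⁻ e in F j, (F n)ᶜ.indicator 1 (e * h) ∂μ) / μ (F j) ∂μ)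
      / μ (F n)) atTop (𝓝 0) := by
  have h := ENNReal.Tendsto.mul_const (b := (μ (F j))⁻¹) (S.exc_tendsto j)
    (Or.inr (ENNReal.inv_ne_top.2 (S.hpos j).ne'))
  rw [zero_mul] at h
  refine h.congr fun n => ?_
  simp_rw [div_eq_mul_inv]
  rw [lintegral_mul_const _ (S.meas_exc _ n), lintegral_mul_const _ (S.meas_exc' _ n),
    lintegral_lintegral_swap, mul_right_comm]
  exact ((measurable_one.indicator (S.hF n).compl).comp (by fun_prop)).aemeasurable

lemma Setup.max_bdd (S : Setup μ F P T C) {f : Ω → ℝ≥0∞} (hf : Measurable f) (M : ℝ≥0∞)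
    (hMtop : M ≠ ∞) (hM : ∀ ω, f ω ≤ M) (t : ℝ≥0∞) (N : ℕ) :
    t * P {ω | ∃ j < N, 2 * t ≤ Ap μ F T f j ω} ≤ 2 * (1 + C) * ∫⁻ ω, f ω ∂P := by
  set E := {ω | ∃ j < N, 2 * t ≤ Ap μ F T f j ω} with hE
  have hEm : MeasurableSet E := by
    have : E = ⋃ j ∈ Finset.range N, {ω | 2 * t ≤ Ap μ F T f j ω} := by
      ext; simp [hE]
    rw [this]
    exact Finset.measurableSet_biUnion _ fun j _ => measurableSet_le measurable_const (S.meas_Ap j hf)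
  set κ : ℕ → ℕ → G → ℝ≥0∞ := fun n j h =>
    (∫⁻ e in F j, (F n)ᶜ.indicator 1 (e * h) ∂μ) / μ (F j) with hκ
  have hκm : ∀ n j, Measurable (κ n j) := fun n j => (S.meas_exc' _ n).div_const _
  have hTm : ∀ ω, Measurable fun g => T g ω := fun ω => S.hmeas.comp measurable_prodMk_right
  have step : ∀ n ω, t * ∫⁻ h in F n, E.indicator 1 (T h ω) ∂μ ≤
      2 * (1 + C) * ∫⁻ g in F n, f (T g ω) ∂μ +
        ∑ j ∈ Finset.range N, M * ∫⁻ h in F n, κ n j h ∂μ := by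
    intro n ω
    set a : G → ℝ≥0∞ := (F n).indicator fun g => f (T g ω) with ha
    have ham : Measurable a := (hf.comp (hTm ω)).indicator (S.hF n)
    have hgm := group_max μ F S.hF S.hpos S.hfin C S.hC N ham t
    rw [ha, lintegral_indicator (S.hF n), ← ha] at hgm
    have hset : MeasurableSet {h | T h ω ∈ E} := hTm ω hEm
    have e1 : ∫⁻ h in F n, E.indicator 1 (T h ω) ∂μ = μ ({h | T h ω ∈ E} ∩ F n) := by
      rw [← Measure.restrict_apply hset, ← lintegral_indicator_one hset]; rfl
    rw [e1]
    have hsub : {h | T h ω ∈ E} ∩ F n ⊆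
        {h | ∃ j < N, t ≤ (∫⁻ e in F j, a (e * h) ∂μ) / μ (F j)} ∪
          ⋃ j ∈ Finset.range N, ({h | t ≤ M * κ n j h} ∩ F n) := by
      rintro h ⟨⟨j, hj, hh⟩, hhF⟩
      have hle : Ap μ F T f j (T h ω) ≤
          (∫⁻ e in F j, a (e * h) ∂μ) / μ (F j) + M * κ n j h := by
        rw [hκ]
        simp only [Ap]
        rw [← mul_div_assoc, ← ENNReal.add_div]
        refine ENNReal.div_le_div_right ?_ _
        rw [← lintegral_const_mul' _ _ hMtop, ← lintegral_add_left (by fun_prop)]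
        refine lintegral_mono fun e => ?_
        have : T e (T h ω) = T (e * h) ω := by rw [S.hmul]; rfl
        by_cases hx : e * h ∈ F n
        · simp [ha, hx, this]
        · simpa [hx] using (hM _).trans le_add_self
      by_cases h1 : t ≤ (∫⁻ e in F j, a (e * h) ∂μ) / μ (F j)
      · exact Or.inl ⟨j, hj, h1⟩
      · right
        simp only [Set.mem_iUnion, Finset.mem_range]
        refine ⟨j, hj, ?_, hhF⟩
        by_contra h2
        have := ENNReal.add_lt_add (not_le.1 h1) (not_le.1 h2)
        rw [← two_mul] at this
        exact absurd (hh.trans hle) (not_le.2 this)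
    calc _ ≤ t * (μ {h | ∃ j < N, t ≤ (∫⁻ e in F j, a (e * h) ∂μ) / μ (F j)} +
          ∑ j ∈ Finset.range N, μ ({h | t ≤ M * κ n j h} ∩ F n)) := by
          gcongr
          exact ((measure_mono hsub).trans (measure_union_le _ _)).trans
            (add_le_add le_rfl (measure_biUnion_finset_le _ _))
      _ = t * μ {h | ∃ j < N, t ≤ (∫⁻ e in F j, a (e * h) ∂μ) / μ (F j)} +
          ∑ j ∈ Finset.range N, t * μ ({h | t ≤ M * κ n j h} ∩ F n) := by
          rw [mul_add, Finset.mul_sum]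
      _ ≤ _ := by
          refine add_le_add hgm (Finset.sum_le_sum fun j _ => ?_)
          have hm := (hκm n j).const_mul M
          rw [← Measure.restrict_apply (measurableSet_le measurable_const hm),
            ← lintegral_const_mul _ (hκm n j)]
          exact mul_meas_ge_le_lintegral hm t
  have step2 : ∀ n, t * P E ≤ 2 * (1 + C) * ∫⁻ ω, f ω ∂P +
      ∑ j ∈ Finset.range N, M * ((∫⁻ h in F n, κ n j h ∂μ) / μ (F n)) := by
    intro n
    have hone : Measurable (E.indicator (1 : Ω → ℝ≥0∞)) := measurable_one.indicator hEm
    have := lintegral_mono (μ := P) (step n)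
    rw [lintegral_const_mul _ (S.meas_int _ hone), S.swap _ hone,
      lintegral_indicator_one hEm, lintegral_add_right _ measurable_const,
      lintegral_const_mul _ (S.meas_int _ hf), S.swap _ hf, lintegral_const, measure_univ,
      mul_one] at this
    have h0 := (S.hpos n).ne'
    have h1 := (S.hfin n).ne
    have h2 := ENNReal.div_le_div_right this (μ (F n))
    calc t * P E = t * (μ (F n) * P E) / μ (F n) := by
          rw [mul_left_comm, mul_comm (μ (F n)), ENNReal.mul_div_cancel_right h0 h1]
      _ ≤ _ := h2
      _ = _ := by
          rw [ENNReal.add_div]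
          congr 1
          · rw [mul_left_comm, mul_comm (μ (F n)), ENNReal.mul_div_cancel_right h0 h1]
          · simp_rw [div_eq_mul_inv]
            rw [Finset.sum_mul]
            simp_rw [mul_assoc]
  have hlim : Tendsto (fun n => 2 * (1 + C) * ∫⁻ ω, f ω ∂P +
      ∑ j ∈ Finset.range N, M * ((∫⁻ h in F n, κ n j h ∂μ) / μ (F n))) atTop
      (𝓝 (2 * (1 + C) * ∫⁻ ω, f ω ∂P + ∑ j ∈ Finset.range N, M * 0)) := by
    refine tendsto_const_nhds.add (tendsto_finsetSum _ fun j _ => ?_)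
    exact ENNReal.Tendsto.const_mul (S.exc_tendsto' j) (Or.inr hMtop)
  simp only [mul_zero, Finset.sum_const_zero, add_zero] at hlim
  exact ge_of_tendsto' hlim step2

/-- The weak type maximal inequality. -/
lemma Setup.max_ineq (S : Setup μ F P T C) {f : Ω → ℝ≥0∞} (hf : Measurable f) (t : ℝ≥0∞) :
    t * P {ω | ∃ j, 2 * t < Ap μ F T f j ω} ≤ 2 * (1 + C) * ∫⁻ ω, f ω ∂P := by
  set fm : ℕ → Ω → ℝ≥0∞ := fun m ω => min (f ω) m with hfm
  have hfmm : ∀ m, Measurable (fm m) := fun m => hf.min measurable_const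
  have hmono : ∀ ω, Monotone fun m => fm m ω := fun ω m m' h =>
    min_le_min le_rfl (by exact_mod_cast h)
  have hsup : ∀ ω, ⨆ m, fm m ω = f ω := by
    intro ω
    simp only [hfm]
    rw [← inf_iSup_eq, ENNReal.iSup_natCast, inf_top_eq]
  have hTm : ∀ ω, Measurable fun g => T g ω := fun ω => S.hmeas.comp measurable_prodMk_right
  have hAsup : ∀ j ω, Ap μ F T f j ω = ⨆ m, Ap μ F T (fm m) j ω := by
    intro j ω
    simp only [Ap]
    rw [← ENNReal.iSup_div, ← lintegral_iSup (f := fun m g => fm m (T g ω)) (fun m => (hfmm m).comp (hTm ω))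
      (fun m m' h g => hmono _ h)]
    simp_rw [hsup]
  have hAmono : ∀ j ω, Monotone fun m => Ap μ F T (fm m) j ω := fun j ω m m' h =>
    ENNReal.div_le_div_right (lintegral_mono fun g => hmono _ h) _
  set E : ℕ → Set Ω := fun m => {ω | ∃ j < m, 2 * t ≤ Ap μ F T (fm m) j ω}
  have hEmono : Monotone E := by
    rintro m m' h ω ⟨j, hj, hh⟩
    exact ⟨j, hj.trans_le h, hh.trans (hAmono j ω h)⟩
  have hsub : {ω | ∃ j, 2 * t < Ap μ F T f j ω} ⊆ ⋃ m, E m := by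
    rintro ω ⟨j, hj⟩
    rw [hAsup, lt_iSup_iff] at hj
    obtain ⟨m, hm⟩ := hj
    refine Set.mem_iUnion.2 ⟨max m (j + 1), j, by simp, ?_⟩
    exact hm.le.trans (hAmono j ω (le_max_left _ _))
  calc _ ≤ t * P (⋃ m, E m) := by gcongr
    _ = ⨆ m, t * P (E m) := by rw [hEmono.measure_iUnion, ENNReal.mul_iSup]
    _ ≤ _ := by
      refine iSup_le fun m => ?_
      refine (S.max_bdd (hfmm m) m (by simp) (fun ω => min_le_right _ _) t m).trans ?_
      gcongr with ω
      exact min_le_left _ _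

end Transfer
end ErgBanach
open Filter MeasureTheory Topology
open scoped Pointwise symmDiff ENNReal

namespace ErgBanach
set_option linter.unusedSectionVars false

section Averages
variable {G : Type*} [Group G] [TopologicalSpace G] [IsTopologicalGroup G]
    [LocallyCompactSpace G] [SecondCountableTopology G]
    [MeasurableSpace G] [BorelSpace G]
    {μ : Measure G} [μ.IsHaarMeasure] {F : ℕ → Set G}
    {Ω : Type*} [MeasurableSpace Ω] {P : Measure Ω} [IsProbabilityMeasure P]
    {T : G → Ω → Ω} {C : ℝ≥0∞}
    {X : Type*} [NormedAddCommGroup X] [NormedSpace ℝ X] [CompleteSpace X]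

/-- Averages of vector valued functions. -/
noncomputable def Av (μ : Measure G) (F : ℕ → Set G) (T : G → Ω → Ω) (φ : Ω → X) (n : ℕ)
    (ω : Ω) : X :=
  (μ (F n)).toReal⁻¹ • ∫ g in F n, φ (T g ω) ∂μ

/-- The conclusion of the ergodic theorem. -/
def Good (μ : Measure G) (F : ℕ → Set G) (P : Measure Ω) (T : G → Ω → Ω) (φ : Ω → X) : Prop :=
  ∃ ψ : Ω → X, Integrable ψ P ∧ (∀ g : G, ∀ᵐ ω ∂P, ψ (T g ω) = ψ ω) ∧
    (∀ᵐ ω ∂P, Tendsto (fun n => Av μ F T φ n ω) atTop (𝓝 (ψ ω))) ∧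
    Tendsto (fun n => ∫⁻ ω, ‖Av μ F T φ n ω - ψ ω‖ₑ ∂P) atTop (𝓝 0)

lemma Setup.map_eq (S : Setup μ F P T C) (ν : Measure G) [SFinite ν] :
    Measure.map (fun p : Ω × G => T p.2 p.1) (P.prod ν) = ν Set.univ • P := by
  have hm : Measurable (fun p : Ω × G => T p.2 p.1) := S.hmeas.comp measurable_swap
  ext s hs
  rw [Measure.map_apply hm hs, Measure.prod_apply_symm (hm hs)]
  have : ∀ g, P ((fun x => (x, g)) ⁻¹' ((fun p : Ω × G => T p.2 p.1) ⁻¹' s)) = P s := fun g =>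
    (S.hpres g).measure_preimage hs.nullMeasurableSet
  simp [this, mul_comm]

lemma Setup.ae_comp (S : Setup μ F P T C) {p : Ω → Prop} (hp : ∀ᵐ ω ∂P, p ω) :
    ∀ᵐ ω ∂P, ∀ᵐ g ∂μ, p (T g ω) := by
  have hm : Measurable (fun p : Ω × G => T p.2 p.1) := S.hmeas.comp measurable_swap
  refine Measure.ae_ae_of_ae_prod (p := fun q : Ω × G => p (T q.2 q.1)) ?_
  refine ae_of_ae_map hm.aemeasurable ?_
  rw [S.map_eq μ]
  exact Measure.ae_smul_measure hp _

lemma Setup.ae_Ap_congr (S : Setup μ F P T C) {f f' : Ω → ℝ≥0∞} (h : f =ᵐ[P] f') :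
    ∀ᵐ ω ∂P, ∀ n, Ap μ F T f n ω = Ap μ F T f' n ω := by
  filter_upwards [S.ae_comp h] with ω hω n
  unfold Ap
  rw [lintegral_congr_ae (ae_restrict_of_ae hω)]

lemma Setup.ae_Av_congr (S : Setup μ F P T C) {f f' : Ω → X} (h : f =ᵐ[P] f') :
    ∀ᵐ ω ∂P, ∀ n, Av μ F T f n ω = Av μ F T f' n ω := by
  filter_upwards [S.ae_comp h] with ω hω n
  unfold Av
  rw [integral_congr_ae (ae_restrict_of_ae hω)]

lemma Setup.lint_Ap (S : Setup μ F P T C) {f : Ω → ℝ≥0∞} (hf : AEMeasurable f P) (n : ℕ) :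
    ∫⁻ ω, Ap μ F T f n ω ∂P = ∫⁻ ω, f ω ∂P := by
  have h1 := S.ae_Ap_congr hf.ae_eq_mk
  rw [lintegral_congr_ae (h1.mono fun ω h => h n), lintegral_congr_ae hf.ae_eq_mk]
  unfold Ap
  simp_rw [div_eq_mul_inv]
  rw [lintegral_mul_const _ (S.meas_int _ hf.measurable_mk), S.swap _ hf.measurable_mk,
    mul_right_comm, ENNReal.mul_inv_cancel (S.hpos n).ne' (S.hfin n).ne, one_mul]

lemma Setup.max_ineq' (S : Setup μ F P T C) {f : Ω → ℝ≥0∞} (hf : AEMeasurable f P) (t : ℝ≥0∞) :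
    t * P {ω | ∃ j, 2 * t < Ap μ F T f j ω} ≤ 2 * (1 + C) * ∫⁻ ω, f ω ∂P := by
  rw [lintegral_congr_ae hf.ae_eq_mk]
  refine le_trans ?_ (S.max_ineq hf.measurable_mk t)
  gcongr 1
  refine measure_mono_ae ?_
  filter_upwards [S.ae_Ap_congr hf.ae_eq_mk] with ω hω
  rintro ⟨j, hj⟩
  exact ⟨j, by rwa [← hω j]⟩

lemma Setup.int_prod (S : Setup μ F P T C) {φ : Ω → X} (hφ : Integrable φ P) (n : ℕ) :
    Integrable (fun p : Ω × G => φ (T p.2 p.1)) (P.prod (μ.restrict (F n))) := by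
  have hm : Measurable (fun p : Ω × G => T p.2 p.1) := S.hmeas.comp measurable_swap
  refine Integrable.comp_measurable (f := fun p : Ω × G => T p.2 p.1) (g := φ) ?_ hm
  rw [S.map_eq]
  refine hφ.smul_measure ?_
  simpa using (S.hfin n).ne

lemma Setup.ae_int (S : Setup μ F P T C) {φ : Ω → X} (hφ : Integrable φ P) :
    ∀ᵐ ω ∂P, ∀ n, IntegrableOn (fun g => φ (T g ω)) (F n) μ :=
  ae_all_iff.2 fun n => (S.int_prod hφ n).prod_right_ae

lemma Setup.aesm_Av (S : Setup μ F P T C) {φ : Ω → X} (hφ : Integrable φ P) (n : ℕ) :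
    AEStronglyMeasurable (Av μ F T φ n) P :=
  (S.int_prod hφ n).aestronglyMeasurable.integral_prod_right'.const_smul _

lemma Setup.Av_sub (S : Setup μ F P T C) {φ φ' : Ω → X} (hφ : Integrable φ P)
    (hφ' : Integrable φ' P) :
    ∀ᵐ ω ∂P, ∀ n, Av μ F T (fun x => φ x - φ' x) n ω = Av μ F T φ n ω - Av μ F T φ' n ω := by
  filter_upwards [S.ae_int hφ, S.ae_int hφ'] with ω h h' n
  unfold Av
  rw [← smul_sub, ← integral_sub (h n) (h' n)]

lemma Setup.Av_add (S : Setup μ F P T C) {φ φ' : Ω → X} (hφ : Integrable φ P)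
    (hφ' : Integrable φ' P) :
    ∀ᵐ ω ∂P, ∀ n, Av μ F T (fun x => φ x + φ' x) n ω = Av μ F T φ n ω + Av μ F T φ' n ω := by
  filter_upwards [S.ae_int hφ, S.ae_int hφ'] with ω h h' n
  unfold Av
  rw [← smul_add, ← integral_add (h n) (h' n)]

lemma Setup.enorm_coef (S : Setup μ F P T C) (n : ℕ) :
    ‖(μ (F n)).toReal⁻¹‖ₑ = (μ (F n))⁻¹ := by
  rw [← ENNReal.toReal_inv, Real.enorm_eq_ofReal ENNReal.toReal_nonneg,
    ENNReal.ofReal_toReal (ENNReal.inv_ne_top.2 (S.hpos n).ne')]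

lemma Setup.Av_le (S : Setup μ F P T C) (φ : Ω → X) (n : ℕ) (ω : Ω) :
    ‖Av μ F T φ n ω‖ₑ ≤ Ap μ F T (fun x => ‖φ x‖ₑ) n ω := by
  unfold Av Ap
  rw [enorm_smul, S.enorm_coef, div_eq_mul_inv, mul_comm]
  gcongr
  exact enorm_integral_le_lintegral_enorm _

lemma Setup.ae_Av_sub_le (S : Setup μ F P T C) {φ φ' : Ω → X} (hφ : Integrable φ P)
    (hφ' : Integrable φ' P) :
    ∀ᵐ ω ∂P, ∀ n, ‖Av μ F T φ n ω - Av μ F T φ' n ω‖ₑ ≤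
      Ap μ F T (fun x => ‖φ x - φ' x‖ₑ) n ω := by
  filter_upwards [S.Av_sub hφ hφ'] with ω h n
  rw [← h n]
  exact S.Av_le _ n ω

lemma Setup.lint_Av_sub_le (S : Setup μ F P T C) {φ φ' : Ω → X} (hφ : Integrable φ P)
    (hφ' : Integrable φ' P) (n : ℕ) :
    ∫⁻ ω, ‖Av μ F T φ n ω - Av μ F T φ' n ω‖ₑ ∂P ≤ ∫⁻ ω, ‖φ ω - φ' ω‖ₑ ∂P := by
  rw [← S.lint_Ap (f := fun ω => ‖φ ω - φ' ω‖ₑ) (hφ.sub hφ').aestronglyMeasurable.enorm n]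
  exact lintegral_mono_ae ((S.ae_Av_sub_le hφ hφ').mono fun ω h => h n)

lemma lint_tri {a b c : Ω → X} (ha : AEStronglyMeasurable a P) (hc : AEStronglyMeasurable c P) :
    ∫⁻ ω, ‖a ω - b ω‖ₑ ∂P ≤ ∫⁻ ω, ‖a ω - c ω‖ₑ ∂P + ∫⁻ ω, ‖c ω - b ω‖ₑ ∂P := by
  rw [← lintegral_add_left' (f := fun ω => ‖a ω - c ω‖ₑ) (ha.sub hc).enorm]
  refine lintegral_mono fun ω => ?_
  simp_rw [← edist_eq_enorm_sub]
  exact edist_triangle _ _ _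

/-- The set of good functions is closed. -/
lemma Setup.good_closed (S : Setup μ F P T C) {φ : Ω → X} (hφ : Integrable φ P)
    (happ : ∀ ε : ℝ≥0∞, 0 < ε → ∃ φ' : Ω → X, Integrable φ' P ∧ Good μ F P T φ' ∧
      ∫⁻ ω, ‖φ ω - φ' ω‖ₑ ∂P ≤ ε) : Good μ F P T φ := by
  choose! Φ hΦi hΦg hΦ using happ
  -- a.e. Cauchy
  have hcau1 : ∀ t : ℝ≥0∞, 0 < t → t < ∞ → ∀ᵐ ω ∂P, ∃ N, ∀ n ≥ N, ∀ m ≥ N,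
      edist (Av μ F T φ n ω) (Av μ F T φ m ω) ≤ 6 * t := by
    intro t ht httop
    rw [ae_iff]
    set Bad := {ω | ¬ ∃ N, ∀ n ≥ N, ∀ m ≥ N,
      edist (Av μ F T φ n ω) (Av μ F T φ m ω) ≤ 6 * t} with hBad
    have key : ∀ ε : ℝ≥0∞, 0 < ε → t * P Bad ≤ 2 * (1 + C) * ε := by
      intro ε hε
      obtain ⟨ψ, -, -, hψ, -⟩ := hΦg ε hε
      refine le_trans ?_ ((S.max_ineq' (hφ.sub (hΦi ε hε)).aestronglyMeasurable.enorm t).trans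
        (mul_le_mul_right (hΦ ε hε) _))
      gcongr 1
      refine measure_mono_ae ?_
      filter_upwards [hψ, S.ae_Av_sub_le hφ (hΦi ε hε)] with ω h1 h2 hb
      by_contra hcon
      apply hb
      have h3 : ∀ j, edist (Av μ F T φ j ω) (Av μ F T (Φ ε) j ω) ≤ 2 * t := by
        intro j
        rw [edist_eq_enorm_sub]
        refine (h2 j).trans ?_
        by_contra h4
        exact hcon ⟨j, not_le.1 h4⟩
      obtain ⟨N, hN⟩ := EMetric.tendsto_atTop.1 h1 t ht
      refine ⟨N, fun n hn m hm => ?_⟩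
      calc edist (Av μ F T φ n ω) (Av μ F T φ m ω)
          ≤ edist (Av μ F T φ n ω) (Av μ F T (Φ ε) n ω) + edist (Av μ F T (Φ ε) n ω) (ψ ω)
            + (edist (ψ ω) (Av μ F T (Φ ε) m ω) +
              edist (Av μ F T (Φ ε) m ω) (Av μ F T φ m ω)) :=
            (edist_triangle _ (ψ ω) _).trans
              (add_le_add (edist_triangle _ _ _) (edist_triangle _ _ _))
        _ ≤ 2 * t + t + (t + 2 * t) := by
            refine add_le_add (add_le_add (h3 n) (hN n hn).le) (add_le_add ?_ ?_)
            · rw [edist_comm]; exact (hN m hm).le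
            · rw [edist_comm]; exact h3 m
        _ = 6 * t := by ring
    have h0 : t * P Bad ≤ 0 := by
      have hlim : Tendsto (fun ε : ℝ≥0∞ => 2 * (1 + C) * ε) (𝓝[>] 0) (𝓝 (2 * (1 + C) * 0)) := by
        refine ENNReal.Tendsto.const_mul (tendsto_id.mono_left nhdsWithin_le_nhds) (Or.inr ?_)
        exact ENNReal.mul_ne_top (by simp) (ENNReal.add_ne_top.2 ⟨by simp, S.hCfin.ne⟩)
      rw [mul_zero] at hlim
      refine ge_of_tendsto hlim ?_
      filter_upwards [self_mem_nhdsWithin] with ε hε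
      exact key ε hε
    have := mul_eq_zero.1 (le_antisymm h0 zero_le)
    exact this.resolve_left ht.ne'
  have hcau : ∀ᵐ ω ∂P, ∃ l, Tendsto (fun n => Av μ F T φ n ω) atTop (𝓝 l) := by
    have : ∀ᵐ ω ∂P, ∀ k : ℕ, ∃ N, ∀ n ≥ N, ∀ m ≥ N,
        edist (Av μ F T φ n ω) (Av μ F T φ m ω) ≤ 6 * ((k : ℝ≥0∞) + 1)⁻¹ :=
      ae_all_iff.2 fun k => hcau1 _ (by simp) (by simp)
    filter_upwards [this] with ω hω
    refine cauchySeq_tendsto_of_complete (EMetric.cauchySeq_iff.2 fun ε hε => ?_)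
    have hlim : Tendsto (fun k : ℕ => 6 * ((k : ℝ≥0∞) + 1)⁻¹) atTop (𝓝 (6 * 0)) := by
      refine ENNReal.Tendsto.const_mul ?_ (Or.inr (by simp))
      have := (tendsto_add_atTop_iff_nat 1).2 ENNReal.tendsto_inv_nat_nhds_zero
      simpa using this
    rw [mul_zero] at hlim
    obtain ⟨k, hk⟩ := (hlim.eventually (gt_mem_nhds hε)).exists
    obtain ⟨N, hN⟩ := hω k
    exact ⟨N, fun m hm n hn => (hN m hm n hn).trans_lt hk⟩
  obtain ⟨ψ, hψm, hψ⟩ := exists_stronglyMeasurable_limit_of_tendsto_ae (S.aesm_Av hφ) hcau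
  choose! Ψ hΨi hΨinv hΨlim hΨL using hΦg
  have hψΨ : ∀ ε, 0 < ε → ∫⁻ ω, ‖ψ ω - Ψ ε ω‖ₑ ∂P ≤ ε := by
    intro ε hε
    calc ∫⁻ ω, ‖ψ ω - Ψ ε ω‖ₑ ∂P
        = ∫⁻ ω, liminf (fun n => ‖Av μ F T φ n ω - Av μ F T (Φ ε) n ω‖ₑ) atTop ∂P := by
          refine lintegral_congr_ae ?_
          filter_upwards [hψ, hΨlim ε hε] with ω h1 h2
          exact (h1.sub h2).enorm.liminf_eq.symm
      _ ≤ liminf (fun n => ∫⁻ ω, ‖Av μ F T φ n ω - Av μ F T (Φ ε) n ω‖ₑ ∂P) atTop :=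
          lintegral_liminf_le' fun n => ((S.aesm_Av hφ n).sub (S.aesm_Av (hΦi ε hε) n)).enorm
      _ ≤ liminf (fun n : ℕ => ε) atTop := by
          refine liminf_le_liminf (Eventually.of_forall fun n => ?_)
          exact (S.lint_Av_sub_le hφ (hΦi ε hε) n).trans (hΦ ε hε)
      _ = ε := by simp
  have hψi : Integrable ψ P := by
    have h1 : Integrable (fun ω => ψ ω - Ψ 1 ω) P := by
      refine ⟨hψm.aestronglyMeasurable.sub (hΨi 1 one_pos).aestronglyMeasurable, ?_⟩
      exact (hψΨ 1 one_pos).trans_lt (by simp)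
    refine (h1.add (hΨi 1 one_pos)).congr (Eventually.of_forall fun ω => ?_)
    simp
  refine ⟨ψ, hψi, fun g => ?_, hψ, ?_⟩
  · have h0 : ∫⁻ ω, ‖ψ (T g ω) - ψ ω‖ₑ ∂P = 0 := by
      refine le_antisymm ?_ zero_le
      refine le_of_forall_pos_le_add fun ε hε => ?_
      rw [zero_add]
      have hε2 : 0 < ε / 2 := ENNReal.div_pos hε.ne' (by simp)
      have hcomp : ∫⁻ ω, ‖ψ (T g ω) - Ψ (ε / 2) (T g ω)‖ₑ ∂P ≤ ε / 2 := by
        refine le_trans (le_of_eq ?_) (hψΨ _ hε2)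
        have hm : AEMeasurable (fun ω => ‖ψ ω - Ψ (ε / 2) ω‖ₑ) P :=
          (hψi.sub (hΨi _ hε2)).aestronglyMeasurable.enorm
        have hm' : AEMeasurable (fun ω => ‖ψ ω - Ψ (ε / 2) ω‖ₑ) (Measure.map (T g) P) := by
          rwa [(S.hpres g).map_eq]
        have := lintegral_map' hm' (S.hpres g).aemeasurable
        rw [(S.hpres g).map_eq] at this
        exact this.symm
      have hq := (S.hpres g)
      calc _ ≤ ∫⁻ ω, ‖ψ (T g ω) - Ψ (ε / 2) (T g ω)‖ₑ ∂P
            + ∫⁻ ω, ‖Ψ (ε / 2) (T g ω) - ψ ω‖ₑ ∂P :=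
            lint_tri (a := fun ω => ψ (T g ω)) (c := fun ω => Ψ (ε / 2) (T g ω))
              (hψi.aestronglyMeasurable.comp_measurePreserving hq)
              ((hΨi _ hε2).aestronglyMeasurable.comp_measurePreserving hq)
        _ ≤ ε / 2 + ∫⁻ ω, ‖ψ ω - Ψ (ε / 2) ω‖ₑ ∂P := by
            refine add_le_add hcomp (le_of_eq (lintegral_congr_ae ?_))
            filter_upwards [hΨinv _ hε2 g] with ω h
            rw [h, enorm_sub_rev]
        _ ≤ ε / 2 + ε / 2 := add_le_add le_rfl (hψΨ _ hε2)
        _ = ε := ENNReal.add_halves ε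
    have hm : AEMeasurable (fun ω => ‖ψ (T g ω) - ψ ω‖ₑ) P :=
      ((hψi.aestronglyMeasurable.comp_measurePreserving (S.hpres g)).sub
        hψi.aestronglyMeasurable).enorm
    rw [lintegral_eq_zero_iff' hm] at h0
    filter_upwards [h0] with ω h
    simpa [sub_eq_zero] using h
  · rw [ENNReal.tendsto_nhds_zero]
    intro ε hε
    have hε3 : 0 < ε / 3 := ENNReal.div_pos hε.ne' (by simp)
    filter_upwards [(ENNReal.tendsto_nhds_zero.1 (hΨL _ hε3)) _ hε3] with n hn
    calc _ ≤ ∫⁻ ω, ‖Av μ F T φ n ω - Av μ F T (Φ (ε / 3)) n ω‖ₑ ∂P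
          + ∫⁻ ω, ‖Av μ F T (Φ (ε / 3)) n ω - ψ ω‖ₑ ∂P :=
          lint_tri (S.aesm_Av hφ n) (S.aesm_Av (hΦi _ hε3) n)
      _ ≤ ε / 3 + (∫⁻ ω, ‖Av μ F T (Φ (ε / 3)) n ω - Ψ (ε / 3) ω‖ₑ ∂P
            + ∫⁻ ω, ‖Ψ (ε / 3) ω - ψ ω‖ₑ ∂P) :=
          add_le_add ((S.lint_Av_sub_le hφ (hΦi _ hε3) n).trans (hΦ _ hε3))
            (lint_tri (S.aesm_Av (hΦi _ hε3) n) (hΨi _ hε3).aestronglyMeasurable)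
      _ ≤ ε / 3 + (ε / 3 + ε / 3) := by
          refine add_le_add le_rfl (add_le_add hn ?_)
          refine le_trans (le_of_eq ?_) (hψΨ _ hε3)
          refine lintegral_congr fun ω => ?_
          rw [enorm_sub_rev]
      _ = ε := by rw [← add_assoc, ENNReal.add_thirds]

end Averages
end ErgBanach
open Filter MeasureTheory Topology
open scoped Pointwise symmDiff ENNReal

namespace ErgBanach
set_option linter.unusedSectionVars false

section Final
variable {G : Type*} [Group G] [TopologicalSpace G] [IsTopologicalGroup G]
    [LocallyCompactSpace G] [SecondCountableTopology G]
    [MeasurableSpace G] [BorelSpace G]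
    {μ : Measure G} [μ.IsHaarMeasure] {F : ℕ → Set G}
    {Ω : Type*} [MeasurableSpace Ω] {P : Measure Ω} [IsProbabilityMeasure P]
    {T : G → Ω → Ω} {C : ℝ≥0∞}
    {X : Type*} [NormedAddCommGroup X] [NormedSpace ℝ X] [CompleteSpace X]

lemma Setup.good_congr (S : Setup μ F P T C) {φ φ' : Ω → X} (h : φ =ᵐ[P] φ')
    (hg : Good μ F P T φ) : Good μ F P T φ' := by
  obtain ⟨ψ, h1, h2, h3, h4⟩ := hg
  have hA := S.ae_Av_congr h
  refine ⟨ψ, h1, h2, ?_, ?_⟩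
  · filter_upwards [h3, hA] with ω a b
    exact a.congr b
  · refine h4.congr fun n => lintegral_congr_ae ?_
    filter_upwards [hA] with ω a
    rw [a n]

lemma Setup.good_add (S : Setup μ F P T C) {φ φ' : Ω → X} (hi : Integrable φ P)
    (hi' : Integrable φ' P) (hg : Good μ F P T φ) (hg' : Good μ F P T φ') :
    Good μ F P T (fun ω => φ ω + φ' ω) := by
  obtain ⟨ψ, h1, h2, h3, h4⟩ := hg
  obtain ⟨ψ', h1', h2', h3', h4'⟩ := hg'
  have hA := S.Av_add hi hi'
  refine ⟨fun ω => ψ ω + ψ' ω, h1.add h1', fun g => ?_, ?_, ?_⟩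
  · filter_upwards [h2 g, h2' g] with ω a b
    rw [a, b]
  · filter_upwards [h3, h3', hA] with ω a b c
    exact (a.add b).congr fun n => (c n).symm
  · have := h4.add h4'
    rw [add_zero] at this
    refine tendsto_of_tendsto_of_tendsto_of_le_of_le tendsto_const_nhds this
      (fun _ => zero_le) fun n => ?_
    dsimp only
    rw [← lintegral_add_left' (f := fun ω => ‖Av μ F T φ n ω - ψ ω‖ₑ)
      ((S.aesm_Av hi n).sub h1.aestronglyMeasurable).enorm]
    refine lintegral_mono_ae ?_
    filter_upwards [hA] with ω a
    rw [a n, add_sub_add_comm]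
    exact enorm_add_le _ _

lemma Setup.good_smul_const (S : Setup μ F P T C) {f : Ω → ℝ} (x : X)
    (hg : Good μ F P T f) : Good μ F P T (fun ω => f ω • x) := by
  obtain ⟨ψ, h1, h2, h3, h4⟩ := hg
  have hA : ∀ n ω, Av μ F T (fun ω => f ω • x) n ω = Av μ F T f n ω • x := by
    intro n ω
    unfold Av
    rw [integral_smul_const, smul_assoc]
  refine ⟨fun ω => ψ ω • x, h1.smul_const x, fun g => ?_, ?_, ?_⟩
  · filter_upwards [h2 g] with ω a
    rw [a]
  · filter_upwards [h3] with ω a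
    simp_rw [hA]
    exact a.smul_const x
  · have := ENNReal.Tendsto.mul_const (b := ‖x‖ₑ) h4 (Or.inr enorm_ne_top)
    rw [zero_mul] at this
    refine this.congr fun n => ?_
    rw [← lintegral_mul_const' _ _ enorm_ne_top]
    refine lintegral_congr fun ω => ?_
    rw [hA, ← sub_smul, enorm_smul]

lemma Setup.good_inv (S : Setup μ F P T C) {φ : Ω → X} (hi : Integrable φ P)
    (hinv : ∀ g, ∀ᵐ ω ∂P, φ (T g ω) = φ ω) : Good μ F P T φ := by
  -- replace by a strongly measurable version
  obtain ⟨φ', hm, heq⟩ := hi.aestronglyMeasurable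
  have hi' : Integrable φ' P := hi.congr heq
  refine S.good_congr heq.symm ?_
  have hinv' : ∀ g, ∀ᵐ ω ∂P, φ' (T g ω) = φ' ω := by
    intro g
    filter_upwards [hinv g, heq, (S.hpres g).quasiMeasurePreserving.ae heq] with ω a b c
    rw [← b, ← c, a]
  have hTm : Measurable (fun p : Ω × G => T p.2 p.1) := S.hmeas.comp measurable_swap
  have hset : MeasurableSet {p : Ω × G | φ' (T p.2 p.1) = φ' p.1} :=
    (hm.comp_measurable hTm).measurableSet_eq_fun (hm.comp_measurable measurable_fst)
  have hae : ∀ᵐ ω ∂P, ∀ᵐ g ∂μ, φ' (T g ω) = φ' ω := by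
    have := (Measure.ae_ae_comm (μ := μ) (ν := P) (p := fun g ω => φ' (T g ω) = φ' ω)
      (measurable_swap hset)).1 (Eventually.of_forall hinv')
    exact this
  have hA : ∀ᵐ ω ∂P, ∀ n, Av μ F T φ' n ω = φ' ω := by
    filter_upwards [hae] with ω h n
    unfold Av
    rw [integral_congr_ae (ae_restrict_of_ae h), setIntegral_const, smul_smul, Measure.real,
      inv_mul_cancel₀, one_smul]
    exact (ENNReal.toReal_pos (S.hpos n).ne' (S.hfin n).ne).ne'
  refine ⟨φ', hi', hinv', ?_, ?_⟩
  · filter_upwards [hA] with ω h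
    simp_rw [h]
    exact tendsto_const_nhds
  · refine tendsto_const_nhds.congr fun n => ?_
    symm
    rw [lintegral_congr_ae (g := fun _ => 0), lintegral_zero]
    filter_upwards [hA] with ω h
    simp [h]

lemma Setup.good_cob_ind (S : Setup μ F P T C) (g : G) (x : X) {E : Set Ω} (hE : MeasurableSet E) :
    Good μ F P T (fun ω => E.indicator (fun _ => x) ω - E.indicator (fun _ => x) (T g ω)) := by
  set u : Ω → X := E.indicator (fun _ => x) with hu
  have hum : StronglyMeasurable u := stronglyMeasurable_const.indicator hE
  have hub : ∀ ω, ‖u ω‖ₑ ≤ ‖x‖ₑ := fun ω => enorm_indicator_le_enorm_self _ _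
  have hbd : ∀ n ω, ‖Av μ F T (fun ω => u ω - u (T g ω)) n ω‖ₑ ≤
      ‖x‖ₑ * (μ ((g • F n) ∆ F n) / μ (F n)) := by
    intro n ω
    set v : G → X := fun e => u (T e ω) with hv
    have hTm : Measurable fun e => T e ω := S.hmeas.comp measurable_prodMk_right
    have hvm : StronglyMeasurable v := hum.comp_measurable hTm
    have hgF : MeasurableSet (g • F n) := (S.hF n).const_smul g
    have hgFfin : μ (g • F n) < ∞ := by rw [measure_smul]; exact S.hfin n
    have hvint : ∀ s, μ s < ∞ → IntegrableOn v s μ := fun s hs => by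
      refine Measure.integrableOn_of_bounded (M := ‖x‖) hs.ne hvm.aestronglyMeasurable ?_
      refine Eventually.of_forall fun e => ?_
      exact norm_indicator_le_norm_self (fun _ => x) (T e ω)
    have h2 : ∫ e in F n, v (g * e) ∂μ = ∫ e in g • F n, v e ∂μ := by
      rw [← integral_indicator (S.hF n), ← integral_indicator hgF]
      rw [← integral_mul_left_eq_self (μ := μ) ((g • F n).indicator v) g]
      refine integral_congr_ae (Eventually.of_forall fun e => ?_)
      have hm : g * e ∈ g • F n ↔ e ∈ F n := Set.smul_mem_smul_set_iff
      by_cases he : e ∈ F n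
      · simp only [Set.indicator_of_mem he, Set.indicator_of_mem (hm.2 he)]
      · simp only [Set.indicator_of_notMem he, Set.indicator_of_notMem (fun h => he (hm.1 h))]
    have hvint2 : IntegrableOn (fun e => v (g * e)) (F n) μ := by
      refine Measure.integrableOn_of_bounded (M := ‖x‖) (S.hfin n).ne
        (hvm.comp_measurable (measurable_const_mul g)).aestronglyMeasurable ?_
      refine Eventually.of_forall fun e => ?_
      exact norm_indicator_le_norm_self (fun _ => x) (T (g * e) ω)
    have h3 : ∫ e in F n, (u (T e ω) - u (T g (T e ω))) ∂μ =
        ∫ e, ((F n).indicator v e - (g • F n).indicator v e) ∂μ := by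
      have : ∀ e, u (T g (T e ω)) = v (g * e) := fun e => by
        simp only [hv, S.hmul]; rfl
      simp_rw [this]
      rw [integral_sub (hvint _ (S.hfin n)) hvint2, h2, integral_sub, integral_indicator (S.hF n),
        integral_indicator hgF]
      · exact (integrable_indicator_iff (S.hF n)).2 (hvint _ (S.hfin n))
      · exact (integrable_indicator_iff hgF).2 (hvint _ hgFfin)
    unfold Av
    rw [enorm_smul, S.enorm_coef, h3, div_eq_mul_inv, ← mul_assoc, mul_comm]
    gcongr
    refine (enorm_integral_le_lintegral_enorm _).trans ?_
    rw [← lintegral_indicator_const (hgF.symmDiff (S.hF n))]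
    refine lintegral_mono fun e => ?_
    have hve : ‖v e‖ₑ ≤ ‖x‖ₑ := hub _
    by_cases h4 : e ∈ F n <;> by_cases h5 : e ∈ g • F n <;>
      simp [h4, h5, Set.mem_symmDiff, hve]
  have hlim : Tendsto (fun n => ‖x‖ₑ * (μ ((g • F n) ∆ F n) / μ (F n))) atTop (𝓝 0) := by
    have := ENNReal.Tendsto.const_mul (a := ‖x‖ₑ) (S.hFol g) (Or.inr enorm_ne_top)
    rwa [mul_zero] at this
  refine ⟨fun _ => 0, integrable_zero _ _ _, fun _ => by simp, ?_, ?_⟩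
  · refine Eventually.of_forall fun ω => ?_
    rw [tendsto_zero_iff_enorm_tendsto_zero]
    exact tendsto_of_tendsto_of_tendsto_of_le_of_le tendsto_const_nhds hlim
      (fun _ => zero_le) fun n => hbd n ω
  · refine tendsto_of_tendsto_of_tendsto_of_le_of_le tendsto_const_nhds hlim
      (fun _ => zero_le) fun n => ?_
    calc _ ≤ ∫⁻ ω, ‖x‖ₑ * (μ ((g • F n) ∆ F n) / μ (F n)) ∂P :=
          lintegral_mono fun ω => by simpa using hbd n ω
      _ = _ := by simp

lemma lint_le_edist {p : ℝ≥0∞} [hp : Fact (1 ≤ p)] (f f' : Lp X p P) :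
    ∫⁻ ω, ‖f ω - f' ω‖ₑ ∂P ≤ edist f f' := by
  rw [Lp.edist_def, ← eLpNorm_one_eq_lintegral_enorm (f := fun ω => f ω - f' ω)]
  exact eLpNorm_le_eLpNorm_of_exponent_le hp.out
    ((Lp.aestronglyMeasurable f).sub (Lp.aestronglyMeasurable f'))

lemma Lp_int {p : ℝ≥0∞} [hp : Fact (1 ≤ p)] (f : Lp X p P) : Integrable f P :=
  (Lp.memLp f).integrable hp.out

lemma Setup.good_closed_Lp (S : Setup μ F P T C) {p : ℝ≥0∞} [hp : Fact (1 ≤ p)] :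
    IsClosed {f : Lp X p P | Good μ F P T f} := by
  refine isClosed_of_closure_subset fun f hf => ?_
  refine S.good_closed (Lp_int f) fun ε hε => ?_
  obtain ⟨f', h1, h2⟩ := EMetric.mem_closure_iff.1 hf ε hε
  exact ⟨f', Lp_int f', h1, (lint_le_edist f f').trans h2.le⟩

lemma Setup.comp_int (S : Setup μ F P T C) (g : G) {u : Ω → X} (hu : Integrable u P) :
    Integrable (fun ω => u (T g ω)) P :=
  (S.hpres g).integrable_comp_of_integrable hu

lemma Setup.good_cob (S : Setup μ F P T C) (g : G) {u : Ω → X} (hu : Integrable u P) :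
    Good μ F P T (fun ω => u ω - u (T g ω)) := by
  refine Integrable.induction (μ := P) (fun u : Ω → X => Good μ F P T (fun ω => u ω - u (T g ω)))
    ?_ ?_ ?_ ?_ hu
  · intro c s hs _
    exact S.good_cob_ind g c hs
  · intro f f' _ hf hf' h h'
    have := S.good_add (hf.sub (S.comp_int g hf)) (hf'.sub (S.comp_int g hf')) h h'
    refine S.good_congr (Eventually.of_forall fun ω => ?_) this
    simp only [Pi.add_apply, Pi.sub_apply]
    abel
  · refine isClosed_of_closure_subset fun f hf => ?_
    have hfi := Lp_int f
    refine S.good_closed (hfi.sub (S.comp_int g hfi)) fun ε hε => ?_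
    have hε2 : 0 < ε / 2 := ENNReal.div_pos hε.ne' (by simp)
    obtain ⟨f', h1, h2⟩ := EMetric.mem_closure_iff.1 hf _ hε2
    have hfi' := Lp_int f'
    refine ⟨_, hfi'.sub (S.comp_int g hfi'), h1, ?_⟩
    have h3 := (lint_le_edist f f').trans h2.le
    have hm : AEMeasurable (fun ω => ‖f ω - f' ω‖ₑ) P := (hfi.sub hfi').aestronglyMeasurable.enorm
    have hm' : AEMeasurable (fun ω => ‖f ω - f' ω‖ₑ) (Measure.map (T g) P) := by
      rwa [(S.hpres g).map_eq]
    have h4 := lintegral_map' hm' (S.hpres g).aemeasurable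
    rw [(S.hpres g).map_eq] at h4
    calc _ ≤ ∫⁻ ω, (‖f ω - f' ω‖ₑ + ‖f (T g ω) - f' (T g ω)‖ₑ) ∂P := by
          refine lintegral_mono fun ω => ?_
          simp only [Pi.sub_apply]
          rw [sub_sub_sub_comm]
          exact enorm_sub_le
      _ = ∫⁻ ω, ‖f ω - f' ω‖ₑ ∂P + ∫⁻ ω, ‖f (T g ω) - f' (T g ω)‖ₑ ∂P :=
          lintegral_add_left' hm _
      _ ≤ ε / 2 + ε / 2 := add_le_add h3 (by rw [← h4]; exact h3)
      _ = ε := ENNReal.add_halves ε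
  · intro f f' h _ hg
    refine S.good_congr ?_ hg
    filter_upwards [h, (S.hpres g).quasiMeasurePreserving.ae h] with ω a b
    rw [a, b]

lemma Setup.good_L2 (S : Setup μ F P T C) (f : Lp ℝ 2 P) : Good μ F P T f := by
  set U : G → (Lp ℝ 2 P →ₗᵢ[ℝ] Lp ℝ 2 P) := fun g =>
    Lp.compMeasurePreservingₗᵢ ℝ (T g) (S.hpres g) with hU
  have hUc : ∀ g u, (U g u : Ω → ℝ) =ᵐ[P] fun ω => u (T g ω) := fun g u =>
    Lp.coeFn_compMeasurePreserving u (S.hpres g)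
  set W : Submodule ℝ (Lp ℝ 2 P) := Submodule.span ℝ {v | ∃ g u, v = u - U g u} with hW
  have : CompleteSpace W.topologicalClosure :=
    W.isClosed_topologicalClosure.completeSpace_coe
  obtain ⟨y, hy, z, hz, rfl⟩ := W.topologicalClosure.exists_add_mem_mem_orthogonal f
  have hgz : Good μ F P T z := by
    refine S.good_inv (Lp_int z) fun g => ?_
    have h1 : inner ℝ (z - U g z) z = 0 :=
      (Submodule.mem_orthogonal _ _).1 hz _
        (W.le_topologicalClosure (Submodule.subset_span ⟨g, z, rfl⟩))
    have h2 : ‖z - U g z‖ ^ 2 = 0 := by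
      rw [inner_sub_left, real_inner_self_eq_norm_sq] at h1
      rw [norm_sub_sq_real, (U g).norm_map, real_inner_comm]
      linarith
    have h3 : U g z = z := (sub_eq_zero.1 (norm_eq_zero.1 (pow_eq_zero_iff (two_ne_zero)|>.1 h2))).symm
    have := hUc g z
    rw [h3] at this
    exact this.symm
  have hgW : ∀ w ∈ W, Good μ F P T w := by
    intro w hw
    induction hw using Submodule.span_induction with
    | mem x hx =>
      obtain ⟨g, u, rfl⟩ := hx
      refine S.good_congr ?_ (S.good_cob g (Lp_int u))
      filter_upwards [Lp.coeFn_sub u (U g u), hUc g u] with ω a b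
      rw [a, Pi.sub_apply, b]
    | zero =>
      refine S.good_congr (φ := fun _ => (0 : ℝ)) (Lp.coeFn_zero ℝ 2 P).symm ?_
      exact S.good_inv (integrable_zero _ _ _) fun _ => by simp
    | add a b _ _ ha hb =>
      exact S.good_congr (Lp.coeFn_add a b).symm (S.good_add (Lp_int a) (Lp_int b) ha hb)
    | smul c a _ ha =>
      refine S.good_congr ?_ (S.good_smul_const c ha)
      filter_upwards [Lp.coeFn_smul c a] with ω h
      rw [h, Pi.smul_apply, smul_eq_mul, smul_eq_mul, mul_comm]
  have hgy : Good μ F P T y :=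
    S.good_closed_Lp.closure_subset_iff.2 (fun w hw => hgW w hw) hy
  exact S.good_congr (Lp.coeFn_add y z).symm (S.good_add (Lp_int y) (Lp_int z) hgy hgz)

lemma Setup.good_all (S : Setup μ F P T C) {φ : Ω → X} (hφ : Integrable φ P) :
    Good μ F P T φ := by
  refine Integrable.induction (μ := P) (fun u : Ω → X => Good μ F P T u) ?_ ?_ ?_ ?_ hφ
  · intro c s hs _
    have hL : MemLp (s.indicator fun _ => (1 : ℝ)) 2 P :=
      memLp_indicator_const 2 hs 1 (Or.inr (measure_ne_top _ _))
    have h1 := S.good_congr hL.coeFn_toLp (S.good_L2 hL.toLp)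
    refine S.good_congr (Eventually.of_forall fun ω => ?_) (S.good_smul_const c h1)
    by_cases h : ω ∈ s <;> simp [h]
  · intro f f' _ hf hf' h h'
    exact S.good_add hf hf' h h'
  · exact S.good_closed_Lp
  · intro f f' h _ hg
    exact S.good_congr h hg

end Final
end ErgBanach


theorem ergodic_theorem_banach
    {G : Type*} [Group G] [TopologicalSpace G] [IsTopologicalGroup G]
    [LocallyCompactSpace G] [SecondCountableTopology G]
    [MeasurableSpace G] [BorelSpace G]
    (μ : Measure G) [μ.IsHaarMeasure]
    (F : ℕ → Set G) (hFmeas : ∀ n, MeasurableSet (F n))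
    (hFpos : ∀ n, 0 < μ (F n)) (hFfin : ∀ n, μ (F n) < ∞)
    (hFolner : ∀ g : G,
      Tendsto (fun n => μ ((g • F n) ∆ F n) / μ (F n)) atTop (𝓝 0))
    (hTempered : ∃ C : ℝ≥0∞, 0 < C ∧ C < ∞ ∧
      ∀ n : ℕ, μ (⋃ k ∈ Finset.range n, (F k)⁻¹ * F n) ≤ C * μ (F n))
    {Ω : Type*} [MeasurableSpace Ω] (P : Measure Ω) [IsProbabilityMeasure P]
    (T : G → Ω → Ω)
    (hTmul : ∀ g h : G, T (g * h) = T g ∘ T h) (hTone : T 1 = id)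
    (hTmeas : Measurable fun p : G × Ω => T p.1 p.2)
    (hTpres : ∀ g : G, MeasurePreserving (T g) P P)
    {X : Type*} [NormedAddCommGroup X] [NormedSpace ℝ X] [CompleteSpace X]
    [SecondCountableTopology X] [MeasurableSpace X] [BorelSpace X]
    (φ : Ω → X) (hφ : Integrable φ P) :
    ∃ ψ : Ω → X, Integrable ψ P ∧
      (∀ g : G, ∀ᵐ ω ∂P, ψ (T g ω) = ψ ω) ∧
      (∀ᵐ ω ∂P, Tendsto
        (fun n => (μ (F n)).toReal⁻¹ • ∫ g in F n, φ (T g ω) ∂μ)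
        atTop (𝓝 (ψ ω))) ∧
      Tendsto
        (fun n => ∫ ω, ‖((μ (F n)).toReal⁻¹ • ∫ g in F n, φ (T g ω) ∂μ) - ψ ω‖ ∂P)
        atTop (𝓝 0) := by
  obtain ⟨C, -, hC, hT⟩ := hTempered
  have S : ErgBanach.Setup μ F P T C :=
    ⟨hFmeas, hFpos, hFfin, hFolner, hC, hT, hTmul, hTmeas, hTpres⟩
  obtain ⟨ψ, h1, h2, h3, h4⟩ := S.good_all hφ
  refine ⟨ψ, h1, h2, h3, ?_⟩
  have h5 := (ENNReal.tendsto_toReal ENNReal.zero_ne_top).comp h4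
  rw [ENNReal.toReal_zero] at h5
  refine h5.congr fun n => ?_
  exact (integral_norm_eq_lintegral_enorm
    ((S.aesm_Av hφ n).sub h1.aestronglyMeasurable)).symm
end

section
/- Let X be a complete separable metric space equipped with a Busemann midpoint map m. Let G be a compact topological group acting continuously on X by isometries and preserving midpoints (g·m(x,y) = m(g·x, g·y) for all g ∈ G and x, y ∈ X). Then the action has a fixed point: there exists p ∈ X with g·p = p for all g ∈ G. -/
open Filter MeasureTheory Metric Topology
open scoped Pointwise symmDiff ENNReal

/-- A Busemann midpoint map on a metric space. -/
structure BusemannMidpoint (X : Type*) [MetricSpace X] where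
  mid : X → X → X
  dist_left : ∀ x y, dist x (mid x y) = dist x y / 2
  dist_right : ∀ x y, dist (mid x y) y = dist x y / 2
  convex : ∀ x y x' y', dist (mid x y) (mid x' y') ≤ (dist x x' + dist y y') / 2

/-- A barycenter family on a metric space with a Busemann midpoint map. -/
structure BarycenterFamily (X : Type*) [MetricSpace X] (M : BusemannMidpoint X) where
  b : (n : ℕ) → (Fin n → X) → X
  b_one : ∀ x : Fin 1 → X, b 1 x = x 0
  b_two : ∀ x : Fin 2 → X, b 2 x = M.mid (x 0) (x 1)
  perm_invariant : ∀ (n : ℕ) (σ : Equiv.Perm (Fin n)) (x : Fin n → X), b n (x ∘ σ) = b n x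
  lipschitz : ∀ (n : ℕ) (x y : Fin n → X),
    dist (b n x) (b n y) ≤ (1 / n : ℝ) * ∑ i, dist (x i) (y i)
  recur : ∀ (n : ℕ), 1 ≤ n → ∀ x : Fin (n + 1) → X,
    b (n + 1) x = b (n + 1) (fun i => b n (x ∘ i.succAbove))

/-- The `k`-fold repetition of a tuple. -/
def repTuple {X : Type*} {n : ℕ} (Q : Fin n → X) (k : ℕ) : Fin (n * k) → X :=
  fun i => Q ⟨i.val % n, Nat.mod_lt _ (by
    rcases Nat.eq_zero_or_pos n with h | h
    · exact absurd i.isLt (by simp [h])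
    · exact h)⟩


/-- Properties of a barycenter map on `n`-tuples. -/
def IsBary {X : Type*} [MetricSpace X] (G : Type*) [Group G] [MulAction G X] (n : ℕ)
    (b : (Fin n → X) → X) : Prop :=
  (∀ z : X, b (fun _ => z) = z) ∧
  (∀ (σ : Equiv.Perm (Fin n)) (x : Fin n → X), b (x ∘ σ) = b x) ∧
  (∀ x y : Fin n → X, (n : ℝ) * dist (b x) (b y) ≤ ∑ i, dist (x i) (y i)) ∧
  (∀ (g : G) (x : Fin n → X), g • b x = b (fun i => g • x i))

theorem IsBary.dist_le {X : Type*} [MetricSpace X] {G : Type*} [Group G] [MulAction G X] {n : ℕ}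
    {b : (Fin n → X) → X} (hb : IsBary G n b) (hn : 0 < n) (x y : Fin n → X) (C : ℝ)
    (h : ∀ i, dist (x i) (y i) ≤ C) : dist (b x) (b y) ≤ C := by
  have h1 := hb.2.2.1 x y
  have h2 : ∑ i, dist (x i) (y i) ≤ n * C := by
    calc _ ≤ ∑ i : Fin n, C := Finset.sum_le_sum fun i _ => h i
      _ = _ := by simp
  have hn' : (0 : ℝ) < n := by exact_mod_cast hn
  exact le_of_mul_le_mul_left (h1.trans h2) hn'

theorem IsBary.dist_le_pt {X : Type*} [MetricSpace X] {G : Type*} [Group G] [MulAction G X] {n : ℕ}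
    {b : (Fin n → X) → X} (hb : IsBary G n b) (hn : 0 < n) (z : X) (x : Fin n → X) (C : ℝ)
    (h : ∀ i, dist z (x i) ≤ C) : dist z (b x) ≤ C := by
  have := hb.dist_le hn (fun _ => z) x C h
  rwa [hb.1] at this

/-- Limits of iterations give barycenters. -/
theorem exists_bary_of_iter {X : Type*} [MetricSpace X] [CompleteSpace X]
    {G : Type*} [Group G] [MulAction G X]
    (hiso : ∀ (g : G) (x y : X), dist (g • x) (g • y) = dist x y)
    (n : ℕ) (hn : 0 < n) (T : (Fin n → X) → (Fin n → X))
    (hconst : ∀ z : X, T (fun _ => z) = fun _ => z)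
    (hperm : ∀ (σ : Equiv.Perm (Fin n)) (x : Fin n → X), T (x ∘ σ) = T x ∘ σ)
    (hlip : ∀ x y : Fin n → X, ∑ i, dist (T x i) (T y i) ≤ ∑ i, dist (x i) (y i))
    (heq : ∀ (g : G) (x : Fin n → X), T (fun i => g • x i) = fun i => g • T x i)
    (hhull : ∀ (z : X) (x : Fin n → X) (C : ℝ), (∀ i, dist z (x i) ≤ C) → ∀ i, dist z (T x i) ≤ C)
    (hdiam : ∀ (x : Fin n → X) (ε : ℝ), 0 < ε →
      ∃ k, ∀ i j, dist (T^[k] x i) (T^[k] x j) ≤ ε) :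
    ∃ b : (Fin n → X) → X, IsBary G n b := by
  have hh : ∀ (z : X) (x : Fin n → X) (C : ℝ) (k : ℕ), (∀ i, dist z (x i) ≤ C) →
      ∀ i, dist z (T^[k] x i) ≤ C := by
    intro z x C k h
    induction k with
    | zero => simpa using h
    | succ k ih => rw [Function.iterate_succ_apply']; exact hhull _ _ _ ih
  have key : ∀ (x : Fin n → X) (ε : ℝ), 0 < ε → ∃ k, ∀ l ≥ k, ∀ i j,
      dist (T^[k] x i) (T^[l] x j) ≤ ε := by
    intro x ε hε
    obtain ⟨k, hk⟩ := hdiam x ε hε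
    refine ⟨k, fun l hl i j => ?_⟩
    obtain ⟨m, rfl⟩ := Nat.exists_eq_add_of_le hl
    rw [add_comm, Function.iterate_add_apply]
    exact hh _ _ _ _ (hk i) j
  have hlim : ∀ x : Fin n → X, ∃ p, ∀ i, Tendsto (fun k => T^[k] x i) atTop (𝓝 p) := by
    intro x
    have hc : CauchySeq (fun k => T^[k] x ⟨0, hn⟩) := by
      rw [Metric.cauchySeq_iff']
      intro ε hε
      obtain ⟨k, hk⟩ := key x (ε / 2) (by linarith)
      refine ⟨k, fun l hl => ?_⟩
      rw [dist_comm]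
      linarith [hk l hl ⟨0, hn⟩ ⟨0, hn⟩]
    obtain ⟨p, hp⟩ := cauchySeq_tendsto_of_complete hc
    refine ⟨p, fun i => ?_⟩
    refine hp.congr_dist ?_
    rw [Metric.tendsto_atTop]
    intro ε hε
    obtain ⟨k, hk⟩ := key x (ε / 3) (by linarith)
    refine ⟨k, fun l hl => ?_⟩
    have h1 := hk l hl i i
    have h2 := hk l hl i ⟨0, hn⟩
    have h3 := dist_triangle_left (T^[l] x ⟨0, hn⟩) (T^[l] x i) (T^[k] x i)
    rw [Real.dist_eq, sub_zero, abs_of_nonneg dist_nonneg]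
    linarith
  choose b hb using hlim
  refine ⟨b, ?_, ?_, ?_, ?_⟩
  · intro z
    have h1 : ∀ k, T^[k] (fun _ => z) = fun _ => z := fun k => Function.iterate_fixed (hconst z) k
    have h2 := hb (fun _ => z) ⟨0, hn⟩
    simp only [h1] at h2
    exact (tendsto_nhds_unique h2 tendsto_const_nhds)
  · intro σ x
    have h1 : ∀ k, T^[k] (x ∘ σ) = T^[k] x ∘ σ := by
      intro k
      induction k with
      | zero => rfl
      | succ k ih => rw [Function.iterate_succ_apply', ih, hperm, Function.iterate_succ_apply']
    have h2 := hb (x ∘ σ) ⟨0, hn⟩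
    simp only [h1] at h2
    exact tendsto_nhds_unique h2 (hb x _)
  · intro x y
    have h1 : ∀ k, ∑ i, dist (T^[k] x i) (T^[k] y i) ≤ ∑ i, dist (x i) (y i) := by
      intro k
      induction k with
      | zero => exact le_rfl
      | succ k ih =>
        rw [Function.iterate_succ_apply', Function.iterate_succ_apply']
        exact (hlip _ _).trans ih
    have h2 : Tendsto (fun k => ∑ i, dist (T^[k] x i) (T^[k] y i)) atTop
        (𝓝 (∑ i : Fin n, dist (b x) (b y))) :=
      tendsto_finsetSum _ fun i _ => (hb x i).dist (hb y i)
    have h3 := le_of_tendsto' h2 h1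
    simpa using h3
  · intro g x
    have h1 : ∀ k, T^[k] (fun i => g • x i) = fun i => g • T^[k] x i := by
      intro k
      induction k with
      | zero => rfl
      | succ k ih => rw [Function.iterate_succ_apply', ih, heq, Function.iterate_succ_apply']
    have h2 := hb (fun i => g • x i) ⟨0, hn⟩
    simp only [h1] at h2
    have hg : Continuous (fun x : X => g • x) := (Isometry.of_dist_eq (hiso g)).continuous
    exact tendsto_nhds_unique ((hg.tendsto _).comp (hb x ⟨0, hn⟩)) h2

/-- The Goebel-Kirk inequality gives asymptotic regularity. -/
theorem goebel_kirk {X : Type*} [MetricSpace X] (M : BusemannMidpoint X) (x y : ℕ → X)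
    (hx : ∀ n, x (n + 1) = M.mid (x n) (y n)) (hy : ∀ n, y (n + 1) = M.mid (y n) (x n))
    (B : ℝ) (hB : ∀ i j, dist (x i) (y j) ≤ B) (ε : ℝ) (hε : 0 < ε) :
    ∃ k, dist (x k) (y k) ≤ ε := by
  have hanti : ∀ n, dist (x (n + 1)) (y (n + 1)) ≤ dist (x n) (y n) := by
    intro n
    rw [hx, hy]
    have := M.convex (x n) (y n) (y n) (x n)
    rw [dist_comm (y n) (x n)] at this
    linarith
  have hA : Antitone fun n => dist (x n) (y n) := antitone_nat_of_succ_le hanti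
  have hstep : ∀ i n, dist (y i) (y (i + n)) ≤ n / 2 * dist (x i) (y i) := by
    intro i n
    induction n with
    | zero => simp
    | succ n ih =>
      have h1 : dist (y (i + n)) (y (i + n + 1)) ≤ dist (x i) (y i) / 2 := by
        rw [hy, M.dist_left, dist_comm]
        have := hA (Nat.le_add_right i n)
        simp only at this
        linarith
      have h2 := dist_triangle (y i) (y (i + n)) (y (i + n + 1))
      rw [← add_assoc]
      push_cast
      linarith
  have gk : ∀ (n i : ℕ), (1 + (n : ℝ) / 2) * dist (x i) (y i) ≤ dist (x i) (y (i + n)) +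
      2 ^ n * (dist (x i) (y i) - dist (x (i + n)) (y (i + n))) := by
    intro n
    induction n with
    | zero => intro i; simp
    | succ n ih =>
      intro i
      have h1 := ih (i + 1)
      have e : i + 1 + n = i + (n + 1) := by ring
      rw [e] at h1
      have h2 : dist (x (i + 1)) (y (i + (n + 1))) ≤
          (dist (x i) (y (i + (n + 1))) + dist (y i) (y (i + (n + 1)))) / 2 := by
        have h := M.convex (x i) (y i) (y (i + (n + 1))) (y (i + (n + 1)))
        have h0 : M.mid (y (i + (n + 1))) (y (i + (n + 1))) = y (i + (n + 1)) := by
          have := M.dist_left (y (i + (n + 1))) (y (i + (n + 1)))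
          rw [dist_self, zero_div] at this
          exact (dist_eq_zero.1 this).symm
        rw [h0, ← hx] at h
        exact h
      have h3 := hstep i (n + 1)
      have h4 := hanti i
      have h5 : (n : ℝ) + 2 ≤ 2 ^ (n + 1) := by
        have : n + 2 ≤ 2 ^ (n + 1) := Nat.lt_two_pow_self (n := n + 1)
        exact_mod_cast this
      have h6 := mul_nonneg (sub_nonneg.2 h5) (sub_nonneg.2 h4)
      push_cast at h3 ⊢
      rw [pow_succ] at h6 ⊢
      linarith
  have hB0 : 0 ≤ B := dist_nonneg.trans (hB 0 0)
  by_contra! hcon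
  have hbd : BddBelow (Set.range fun n => dist (x n) (y n)) :=
    ⟨0, by rintro _ ⟨n, rfl⟩; exact dist_nonneg⟩
  have hl := tendsto_atTop_ciInf hA hbd
  set r := ⨅ n, dist (x n) (y n)
  have hr : ε ≤ r := le_ciInf fun n => (hcon n).le
  obtain ⟨n, hn⟩ := exists_nat_gt (2 * B / ε)
  have h1 : ∀ i, (1 + (n : ℝ) / 2) * dist (x i) (y i) ≤ B +
      2 ^ n * (dist (x i) (y i) - dist (x (i + n)) (y (i + n))) := fun i =>
    (gk n i).trans (by linarith [hB i (i + n)])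
  have h2 := le_of_tendsto_of_tendsto' (hl.const_mul (1 + (n : ℝ) / 2))
    (((hl.sub ((tendsto_add_atTop_iff_nat n).2 hl)).const_mul (2 ^ n)).const_add B) h1
  rw [sub_self, mul_zero, add_zero] at h2
  rw [div_lt_iff₀ hε] at hn
  have h3 : (n : ℝ) * ε ≤ n * r := mul_le_mul_of_nonneg_left hr (Nat.cast_nonneg n)
  linarith

theorem exists_bary_two {X : Type*} [MetricSpace X] [CompleteSpace X] (M : BusemannMidpoint X)
    {G : Type*} [Group G] [MulAction G X]
    (hiso : ∀ (g : G) (x y : X), dist (g • x) (g • y) = dist x y)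
    (hmid : ∀ (g : G) (x y : X), g • M.mid x y = M.mid (g • x) (g • y)) :
    ∃ b : (Fin 2 → X) → X, IsBary G 2 b := by
  have hid : ∀ z, M.mid z z = z := by
    intro z
    have := M.dist_left z z
    rw [dist_self, zero_div] at this
    exact (dist_eq_zero.1 this).symm
  have hull : ∀ (z : X) (x : Fin 2 → X) (C : ℝ), (∀ i, dist z (x i) ≤ C) →
      ∀ i : Fin 2, dist z (M.mid (x i) (x i.rev)) ≤ C := by
    intro z x C h i
    have := M.convex z z (x i) (x i.rev)
    rw [hid] at this
    linarith [h i, h i.rev]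
  refine exists_bary_of_iter hiso 2 (by norm_num) (fun x i => M.mid (x i) (x i.rev)) ?_ ?_ ?_ ?_
    hull ?_
  · intro z; funext i; exact hid z
  · intro σ x
    have : ∀ (σ : Equiv.Perm (Fin 2)) (i : Fin 2), σ i.rev = (σ i).rev := by decide
    funext i
    simp [this]
  · intro x y
    rw [Fin.sum_univ_two, Fin.sum_univ_two]
    have h1 := M.convex (x 0) (x 1) (y 0) (y 1)
    have h2 := M.convex (x 1) (x 0) (y 1) (y 0)
    have e0 : (0 : Fin 2).rev = 1 := rfl
    have e1 : (1 : Fin 2).rev = 0 := rfl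
    simp only [e0, e1]
    linarith
  · intro g x
    funext i
    exact (hmid _ _ _).symm
  · intro x ε hε
    set T : (Fin 2 → X) → (Fin 2 → X) := fun x i => M.mid (x i) (x i.rev) with hT
    have hh : ∀ (z : X) (x : Fin 2 → X) (C : ℝ) (k : ℕ), (∀ i, dist z (x i) ≤ C) →
        ∀ i, dist z (T^[k] x i) ≤ C := by
      intro z x C k h
      induction k with
      | zero => simpa using h
      | succ k ih => rw [Function.iterate_succ_apply']; exact hull _ _ _ ih
    have h0 : ∀ i, dist (x 0) (x i) ≤ dist (x 0) (x 1) := by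
      intro i; fin_cases i <;> simp
    obtain ⟨k, hk⟩ := goebel_kirk M (fun k => T^[k] x 0) (fun k => T^[k] x 1)
      (fun k => by simp only [Function.iterate_succ_apply']; rfl)
      (fun k => by simp only [Function.iterate_succ_apply']; rfl)
      (dist (x 0) (x 1) + dist (x 0) (x 1))
      (fun i j => (dist_triangle_left _ _ (x 0)).trans
        (add_le_add (hh _ _ _ _ h0 _) (hh _ _ _ _ h0 _))) ε hε
    refine ⟨k, fun i j => ?_⟩
    have hk' := hk
    rw [dist_comm] at hk'
    fin_cases i <;> fin_cases j
    · simpa using hε.le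
    · exact hk
    · exact hk'
    · simpa using hε.le

theorem exists_perm_of_range_eq {α β : Type*} (f g : α → β) (hf : Function.Injective f)
    (hg : Function.Injective g) (h : Set.range f = Set.range g) :
    ∃ τ : Equiv.Perm α, ∀ a, g (τ a) = f a := by
  refine ⟨(Equiv.ofInjective f hf).trans ((Equiv.setCongr h).trans (Equiv.ofInjective g hg).symm),
    fun a => ?_⟩
  simp [Equiv.apply_ofInjective_symm]

theorem exists_bary_succ {X : Type*} [MetricSpace X] [CompleteSpace X]
    {G : Type*} [Group G] [MulAction G X]
    (hiso : ∀ (g : G) (x y : X), dist (g • x) (g • y) = dist x y)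
    (n : ℕ) (hn : 2 ≤ n) (b : (Fin n → X) → X) (hb : IsBary G n b) :
    ∃ b' : (Fin (n + 1) → X) → X, IsBary G (n + 1) b' := by
  have hn0 : 0 < n := by omega
  have hnR : (2 : ℝ) ≤ n := by exact_mod_cast hn
  have hσ : ∀ (σ : Equiv.Perm (Fin (n + 1))) (x : Fin (n + 1) → X) (i : Fin (n + 1)),
      b ((x ∘ σ) ∘ i.succAbove) = b (x ∘ (σ i).succAbove) := by
    intro σ x i
    obtain ⟨τ, hτ⟩ := exists_perm_of_range_eq (σ ∘ i.succAbove) (σ i).succAbove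
      (σ.injective.comp Fin.succAbove_right_injective) Fin.succAbove_right_injective (by
        rw [Set.range_comp, Fin.range_succAbove, Fin.range_succAbove,
          Set.image_compl_eq σ.bijective, Set.image_singleton])
    rw [← hb.2.1 τ (x ∘ (σ i).succAbove)]
    congr 1
    funext a
    have := hτ a
    simp only [Function.comp_apply] at this ⊢
    rw [this]
  have hull : ∀ (z : X) (x : Fin (n + 1) → X) (C : ℝ), (∀ i, dist z (x i) ≤ C) →
      ∀ i : Fin (n + 1), dist z (b (x ∘ i.succAbove)) ≤ C :=
    fun z x C h i => hb.dist_le_pt hn0 _ _ _ fun k => h _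
  have contr : ∀ (x : Fin (n + 1) → X) (i j : Fin (n + 1)),
      dist (b (x ∘ i.succAbove)) (b (x ∘ j.succAbove)) ≤ dist (x i) (x j) / 2 := by
    intro x i j
    rcases eq_or_ne i j with rfl | hij
    · simp
    have h1 := hσ (Equiv.swap i j) x i
    rw [Equiv.swap_apply_left] at h1
    rw [← h1]
    have h2 := hb.2.2.1 (x ∘ i.succAbove) ((x ∘ Equiv.swap i j) ∘ i.succAbove)
    obtain ⟨k, hk⟩ := Fin.exists_succAbove_eq hij.symm
    rw [Finset.sum_eq_single k] at h2
    · simp only [Function.comp_apply, hk, Equiv.swap_apply_right] at h2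
      rw [dist_comm (x j)] at h2
      have h3 := mul_le_mul_of_nonneg_right hnR
        (dist_nonneg (x := b (x ∘ i.succAbove)) (y := b ((x ∘ Equiv.swap i j) ∘ i.succAbove)))
      simp only [Function.comp_def] at h2 h3 ⊢
      linarith
    · intro l _ hl
      have : i.succAbove l ≠ j := fun h => hl (Fin.succAbove_right_injective (h.trans hk.symm))
      simp [Equiv.swap_apply_of_ne_of_ne (Fin.succAbove_ne i l) this]
    · simp
  refine exists_bary_of_iter hiso (n + 1) (by omega) (fun x i => b (x ∘ i.succAbove)) ?_ ?_ ?_ ?_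
    hull ?_
  · intro z; funext i; exact hb.1 z
  · intro σ x
    funext i
    exact hσ σ x i
  · intro x y
    have h1 : ∀ i : Fin (n + 1), (n : ℝ) * dist (b (x ∘ i.succAbove)) (b (y ∘ i.succAbove)) ≤
        (∑ l, dist (x l) (y l)) - dist (x i) (y i) := by
      intro i
      rw [Fin.sum_univ_succAbove _ i, add_sub_cancel_left]
      exact hb.2.2.1 _ _
    have h2 := Finset.sum_le_sum fun i (_ : i ∈ Finset.univ) => h1 i
    rw [← Finset.mul_sum, Finset.sum_sub_distrib] at h2
    simp only [Finset.sum_const, Finset.card_univ, Fintype.card_fin, nsmul_eq_mul] at h2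
    push_cast at h2
    refine le_of_mul_le_mul_left (a := (n : ℝ)) ?_ (by linarith)
    linarith
  · intro g x
    funext i
    exact (hb.2.2.2 _ _).symm
  · intro x ε hε
    set T : (Fin (n + 1) → X) → (Fin (n + 1) → X) := fun x i => b (x ∘ i.succAbove) with hT
    have h1 : ∀ k i j, dist (T^[k] x i) (T^[k] x j) ≤ (1 / 2) ^ k * dist (x i) (x j) := by
      intro k i j
      induction k with
      | zero => simp
      | succ k ih =>
        rw [Function.iterate_succ_apply', pow_succ]
        have := contr (T^[k] x) i j
        simp only [hT] at this ih ⊢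
        linarith
    have h2 : ∀ i j, ∀ᶠ k in atTop, dist (T^[k] x i) (T^[k] x j) ≤ ε := by
      intro i j
      have : Tendsto (fun k : ℕ => (1 / 2 : ℝ) ^ k * dist (x i) (x j)) atTop (𝓝 0) := by
        simpa using (tendsto_pow_atTop_nhds_zero_of_lt_one (r := (1 / 2 : ℝ)) (by norm_num)
          (by norm_num)).mul_const (dist (x i) (x j))
      filter_upwards [this.eventually (gt_mem_nhds hε)] with k hk
      exact (h1 k i j).trans hk.le
    exact (eventually_all.2 fun i => eventually_all.2 fun j => h2 i j).exists

theorem exists_bary {X : Type*} [MetricSpace X] [CompleteSpace X] (M : BusemannMidpoint X)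
    {G : Type*} [Group G] [MulAction G X]
    (hiso : ∀ (g : G) (x y : X), dist (g • x) (g • y) = dist x y)
    (hmid : ∀ (g : G) (x y : X), g • M.mid x y = M.mid (g • x) (g • y)) (n : ℕ) (hn : 0 < n) :
    ∃ b : (Fin n → X) → X, IsBary G n b := by
  rcases Nat.lt_or_ge n 2 with h | h
  · obtain rfl : n = 1 := by omega
    refine ⟨fun x => x 0, fun z => rfl, fun σ x => ?_, fun x y => ?_, fun g x => rfl⟩
    · simp [Subsingleton.elim (σ 0) 0]
    · simp
  · induction n, h using Nat.le_induction with
    | base => exact exists_bary_two M hiso hmid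
    | succ n h ih =>
      obtain ⟨b, hb⟩ := ih (by omega)
      exact exists_bary_succ hiso n h b hb

/-- A minimal net of a compact orbit is almost permuted by the group. -/
theorem exists_net {X : Type*} [MetricSpace X] {G : Type*} [Group G] [MulAction G X]
    (hiso : ∀ (g : G) (x y : X), dist (g • x) (g • y) = dist x y) (p : X)
    (hK : IsCompact (MulAction.orbit G p)) (ε : ℝ) (hε : 0 < ε) :
    ∃ (n : ℕ) (c : Fin n → X), 0 < n ∧ (∀ i, c i ∈ MulAction.orbit G p) ∧
      ∀ g : G, ∃ σ : Equiv.Perm (Fin n), ∀ i, dist (g • c i) (c (σ i)) ≤ 2 * ε := by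
  classical
  let P : ℕ → Prop := fun n => ∃ s : Finset X, s.card ≤ n ∧ (∀ x ∈ s, x ∈ MulAction.orbit G p) ∧
    ∀ y ∈ MulAction.orbit G p, ∃ x ∈ s, dist y x ≤ ε
  have hP : ∃ n, P n := by
    obtain ⟨t, ht, hf, hc⟩ := hK.finite_cover_balls hε
    refine ⟨_, hf.toFinset, le_rfl, fun x hx => ht (by simpa using hx), fun y hy => ?_⟩
    obtain ⟨x, hx, hxy⟩ := Set.mem_iUnion₂.1 (hc hy)
    exact ⟨x, by simpa using hx, (Metric.mem_ball.1 hxy).le⟩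
  obtain ⟨s, hs, hsK, hcov⟩ := Nat.find_spec hP
  have hmin : ∀ s' : Finset X, (∀ x ∈ s', x ∈ MulAction.orbit G p) →
      (∀ y ∈ MulAction.orbit G p, ∃ x ∈ s', dist y x ≤ ε) → s.card ≤ s'.card :=
    fun s' h1 h2 => hs.trans (Nat.find_min' hP ⟨s', le_rfl, h1, h2⟩)
  let c : Fin s.card → X := fun i => (s.equivFin.symm i : X)
  have hcK : ∀ i, c i ∈ MulAction.orbit G p := fun i => hsK _ (s.equivFin.symm i).2
  have hcc : ∀ y ∈ MulAction.orbit G p, ∃ i, dist y (c i) ≤ ε := by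
    intro y hy
    obtain ⟨x, hx, h⟩ := hcov y hy
    exact ⟨s.equivFin ⟨x, hx⟩, by simpa [c] using h⟩
  refine ⟨s.card, c, ?_, hcK, fun g => ?_⟩
  · obtain ⟨x, hx, -⟩ := hcov p (MulAction.mem_orbit_self p)
    exact Finset.card_pos.2 ⟨x, hx⟩
  let r : Fin s.card → Fin s.card → Prop := fun i j => dist (g • c i) (c j) ≤ 2 * ε
  have hall : ∀ A : Finset (Fin s.card), A.card ≤ (A.biUnion fun i =>
      Finset.univ.filter fun j => r i j).card := by
    intro A
    set N := A.biUnion fun i => Finset.univ.filter fun j => r i j with hN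
    have h1 := hmin (Aᶜ.image (fun i => g • c i) ∪ N.image c) ?_ ?_
    · have h2 := Finset.card_union_le (Aᶜ.image (fun i => g • c i)) (N.image c)
      have h3 := Finset.card_image_le (s := Aᶜ) (f := fun i => g • c i)
      have h4 := Finset.card_image_le (s := N) (f := c)
      have h5 := Finset.card_add_card_compl A
      rw [Fintype.card_fin] at h5
      omega
    · intro x hx
      rcases Finset.mem_union.1 hx with hx | hx
      · obtain ⟨i, -, rfl⟩ := Finset.mem_image.1 hx
        exact MulAction.mem_orbit_of_mem_orbit g (hcK i)
      · obtain ⟨i, -, rfl⟩ := Finset.mem_image.1 hx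
        exact hcK i
    · intro y hy
      obtain ⟨i, hi⟩ := hcc (g⁻¹ • y) (MulAction.mem_orbit_of_mem_orbit g⁻¹ hy)
      have hi' : dist y (g • c i) ≤ ε := by
        rw [← hiso g, smul_inv_smul] at hi
        exact hi
      by_cases hA : i ∈ A
      · obtain ⟨j, hj⟩ := hcc y hy
        refine ⟨c j, Finset.mem_union_right _ (Finset.mem_image_of_mem _ ?_), hj⟩
        refine Finset.mem_biUnion.2 ⟨i, hA, Finset.mem_filter.2 ⟨Finset.mem_univ _, ?_⟩⟩
        have := dist_triangle_left (g • c i) (c j) y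
        change dist (g • c i) (c j) ≤ 2 * ε
        linarith
      · exact ⟨g • c i, Finset.mem_union_left _ (Finset.mem_image.2
          ⟨i, Finset.mem_compl.2 hA, rfl⟩), hi'⟩
  obtain ⟨f, hf, hfr⟩ := (Finset.all_card_le_biUnion_card_iff_exists_injective _).1 hall
  refine ⟨Equiv.ofBijective f (Finite.injective_iff_bijective.1 hf), fun i => ?_⟩
  exact (Finset.mem_filter.1 (hfr i)).2

/-- a compact group acting continuously by isometries (and
preserving midpoints) on a nonempty complete separable Busemann space has a
fixed point. -/
theorem compact_group_fixed_point {X : Type*} [MetricSpace X] [CompleteSpace X]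
    [SecondCountableTopology X] [Nonempty X] (M : BusemannMidpoint X)
    {G : Type*} [Group G] [TopologicalSpace G] [IsTopologicalGroup G] [CompactSpace G]
    [MulAction G X]
    (hcont : Continuous fun p : G × X => p.1 • p.2)
    (hiso : ∀ (g : G) (x y : X), dist (g • x) (g • y) = dist x y)
    (hmid : ∀ (g : G) (x y : X), g • M.mid x y = M.mid (g • x) (g • y)) :
    ∃ p : X, ∀ g : G, g • p = p := by
  have step : ∀ (p : X) (D : ℝ), ∃ p' : X, 0 < D → (∀ g : G, dist p (g • p) ≤ D) →
      dist p p' ≤ D ∧ ∀ g : G, dist p' (g • p') ≤ D / 2 := by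
    intro p D
    by_cases hD : 0 < D
    swap
    · exact ⟨p, fun h => absurd h hD⟩
    have hK : IsCompact (MulAction.orbit G p) :=
      isCompact_range (hcont.comp (Continuous.prodMk_left p))
    obtain ⟨n, c, hn, hc, hσ⟩ := exists_net hiso p hK (D / 4) (by linarith)
    obtain ⟨b, hb⟩ := exists_bary M hiso hmid n hn
    refine ⟨b c, fun _ h => ⟨hb.dist_le_pt hn _ _ _ fun i => ?_, fun g => ?_⟩⟩
    · obtain ⟨g, hg⟩ := hc i
      rw [← hg]
      exact h g
    · obtain ⟨σ, hσ⟩ := hσ g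
      rw [dist_comm, hb.2.2.2, ← hb.2.1 σ c]
      refine hb.dist_le hn _ _ _ fun i => (hσ i).trans (by linarith)
  choose f hf using step
  obtain ⟨p₀⟩ := ‹Nonempty X›
  obtain ⟨D, hD, hD0⟩ : ∃ D : ℝ, 0 < D ∧ ∀ g : G, dist p₀ (g • p₀) ≤ D := by
    have hK : IsCompact (MulAction.orbit G p₀) :=
      isCompact_range (hcont.comp (Continuous.prodMk_left p₀))
    obtain ⟨C, hC⟩ := hK.isBounded.subset_closedBall p₀
    refine ⟨max C 1, by positivity, fun g => ?_⟩
    have := hC (MulAction.mem_orbit p₀ g)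
    rw [Metric.mem_closedBall, dist_comm] at this
    exact this.trans (le_max_left _ _)
  let u : ℕ → X := fun n => Nat.rec p₀ (fun k q => f q (D / 2 ^ k)) n
  have hu : ∀ k, u (k + 1) = f (u k) (D / 2 ^ k) := fun k => rfl
  have hpos : ∀ k : ℕ, 0 < D / 2 ^ k := fun k => by positivity
  have h1 : ∀ k (g : G), dist (u k) (g • u k) ≤ D / 2 ^ k := by
    intro k
    induction k with
    | zero => intro g; rw [pow_zero, div_one]; exact hD0 g
    | succ k ih =>
      intro g
      rw [hu, pow_succ, ← div_div]
      exact (hf _ _ (hpos k) ih).2 g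
  have h2 : ∀ k, dist (u k) (u (k + 1)) ≤ 2 * D / 2 / 2 ^ k := by
    intro k
    rw [hu, mul_div_cancel_left₀ _ (two_ne_zero)]
    exact (hf _ _ (hpos k) (h1 k)).1
  obtain ⟨q, hq⟩ := cauchySeq_tendsto_of_complete (cauchySeq_of_le_geometric_two h2)
  refine ⟨q, fun g => ?_⟩
  have hg : Continuous (fun x : X => g • x) := (Isometry.of_dist_eq (hiso g)).continuous
  have h3 : Tendsto (fun k : ℕ => D / 2 ^ k) atTop (𝓝 0) :=
    tendsto_const_nhds.div_atTop (tendsto_pow_atTop_atTop_of_one_lt (by norm_num))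
  have h4 := le_of_tendsto_of_tendsto' (hq.dist ((hg.tendsto q).comp hq)) h3 fun k => h1 k g
  exact (dist_le_zero.1 h4).symm
end
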